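/- arXiv:1705.09595 — 9 statements merged into one kernel-verified Lean document; each statement's English description precedes it below -/
import Mathlib

section
/- Let N be a topological space equipped with its Borel σ-algebra, let φ : ℝ × N → N be a continuous flow (φ(0,x) = x and φ(t, φ(s,x)) = φ(t+s, x) for all t,s ∈ ℝ, x ∈ N), and let μ be a finite Borel measure on N invariant under the flow, i.e. the pushforward of μ under φ(t,·) equals μ for every t ∈ ℝ. Let Σ be a measurable space, ε > 0, j : Σ → N a measurable map, and define ι : ℝ × Σ → N by ι(t,q) = φ(t, j(q)). Assume that the restriction of ι to (−2ε, 2ε) × Σ is a measurable embedding (injective, measurable, and mapping measurable sets to Borel-measurable sets). Then there exists a finite measure μ_Σ on Σ, namely μ_Σ(B) = (2ε)^{−1} μ(ι([−ε,ε) × B)), such that for every measurable set A ⊆ [−ε, ε) × Σ one has μ(ι(A)) = (λ ⊗ μ_Σ)(A), where λ denotes Lebesgue measure on ℝ. -/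
/-!
Pulling `μ` back along `ι` gives a finite measure `ν` on `ℝ × Z`, carried by the box
`[-ε, ε) × Z`. Since `ι (t + s, q) = φ (s, ι (t, q))` and `μ` is flow invariant, for every
measurable `B` the measure `T ↦ ν (T × B)` on `ℝ` gives equal mass to any two translates of an
interval inside `[-ε, ε)`. Its distribution function is therefore additive and monotone, hence
linear (`linear_of_additive`), so the measure is a multiple of Lebesgue measure on `[-ε, ε)`
(`eq_smul_volume_of_locally_invariant`), the multiple being `(2ε)⁻¹ ν ([-ε, ε) × B)`. Thus `ν`
agrees with `λ ⊗ μ_Σ` on rectangles, which determines it.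
-/

open MeasureTheory Set

/-- The Cauchy functional equation on `[0, L]` for nonnegative functions, by comparison of `t`
with the multiples of `L / n`. -/
lemma linear_of_additive {L : ℝ} (hL : 0 < L) (F : ℝ → ℝ) (hF : ∀ t, 0 ≤ F t)
    (hadd : ∀ s t, 0 ≤ s → 0 ≤ t → s + t ≤ L → F (s + t) = F s + F t)
    {t : ℝ} (ht0 : 0 ≤ t) (htL : t ≤ L) : F t = t / L * F L := by
  have hmono : ∀ s t, 0 ≤ s → s ≤ t → t ≤ L → F s ≤ F t := by
    intro s t hs hst ht
    have h := hadd s (t - s) hs (by linarith) (by linarith)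
    rw [add_sub_cancel] at h
    linarith [hF (t - s)]
  have hF0 : F 0 = 0 := by
    have := hadd 0 0 le_rfl le_rfl (by linarith)
    rw [add_zero] at this
    linarith
  have hmul : ∀ x, 0 ≤ x → ∀ k : ℕ, k * x ≤ L → F (k * x) = k * F x := by
    intro x hx k
    induction k with
    | zero => intro _; simp [hF0]
    | succ k ih =>
      intro hk
      push_cast at hk ⊢
      have e : ((k : ℝ) + 1) * x = k * x + x := by ring
      rw [e] at hk ⊢
      rw [hadd _ _ (by positivity) hx hk, ih (by linarith)]
      ring
  have key : ∀ n : ℕ, |F t - t / L * F L| ≤ F L / ((n : ℝ) + 1) := by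
    intro n
    have hn : (0 : ℝ) < (n : ℝ) + 1 := by positivity
    obtain ⟨x, hx⟩ : ∃ x, x = L / ((n : ℝ) + 1) := ⟨_, rfl⟩
    have hx0 : 0 < x := by rw [hx]; positivity
    have hnx : ((n : ℝ) + 1) * x = L := by rw [hx]; field_simp
    have hFL : F L = ((n : ℝ) + 1) * F x := by
      have := hmul x hx0.le (n + 1) (by push_cast; exact hnx.le)
      push_cast at this
      rwa [hnx] at this
    obtain ⟨k, hk⟩ : ∃ k, k = ⌊t / x⌋₊ := ⟨_, rfl⟩
    have hk1 : (k : ℝ) ≤ t / x := by rw [hk]; exact Nat.floor_le (by positivity)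
    have hk2 : t / x < (k : ℝ) + 1 := by rw [hk]; exact Nat.lt_floor_add_one _
    have hlow : (k : ℝ) * F x ≤ F t := by
      have h1 : (k : ℝ) * x ≤ t := (le_div_iff₀ hx0).1 hk1
      rw [← hmul x hx0.le k (h1.trans htL)]
      exact hmono _ _ (by positivity) h1 htL
    have hup : F t ≤ ((k : ℝ) + 1) * F x := by
      have h1 : t ≤ ((k : ℝ) + 1) * x := ((div_lt_iff₀ hx0).1 hk2).le
      by_cases hc : ((k : ℝ) + 1) * x ≤ L
      · have := hmul x hx0.le (k + 1) (by push_cast; exact hc)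
        push_cast at this
        rw [← this]
        exact hmono _ _ ht0 h1 hc
      · have h2 : (n : ℝ) + 1 ≤ (k : ℝ) + 1 := by
          by_contra! h3
          exact hc (hnx ▸ mul_le_mul_of_nonneg_right h3.le hx0.le)
        calc F t ≤ F L := hmono _ _ ht0 htL le_rfl
          _ = ((n : ℝ) + 1) * F x := hFL
          _ ≤ _ := mul_le_mul_of_nonneg_right h2 (hF x)
    have e1 : t / L * F L = t / x * F x := by
      rw [hFL, ← hnx]; field_simp
    have e2 : F L / ((n : ℝ) + 1) = F x := by rw [hFL]; field_simp
    rw [e1, e2, abs_le]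
    have h1 := mul_le_mul_of_nonneg_right hk1 (hF x)
    have h2 := mul_le_mul_of_nonneg_right hk2.le (hF x)
    constructor <;> linarith
  have hlim : Filter.Tendsto (fun n : ℕ => F L / ((n : ℝ) + 1)) Filter.atTop (nhds 0) := by
    have := (tendsto_one_div_add_atTop_nhds_zero_nat (𝕜 := ℝ)).const_mul (F L)
    simpa [div_eq_mul_inv] using this
  have := ge_of_tendsto' hlim key
  exact sub_eq_zero.1 (abs_eq_zero.1 (le_antisymm this (abs_nonneg _)))

/-- A finite measure carried by `[-ε, ε)` and invariant under those translations of subintervals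
that stay inside `[-ε, ε)` is the normalized multiple of Lebesgue measure there. -/
lemma eq_smul_volume_of_locally_invariant {ε : ℝ} (hε : 0 < ε) (ρ : Measure ℝ)
    [IsFiniteMeasure ρ] (hsupp : ρ (Ico (-ε) ε)ᶜ = 0)
    (hρ : ∀ a b s, -ε ≤ a → b ≤ ε → -ε ≤ a + s → b + s ≤ ε →
      ρ (Ico (a + s) (b + s)) = ρ (Ico a b)) :
    ρ = ((ENNReal.ofReal (2 * ε))⁻¹ * ρ (Ico (-ε) ε)) • volume.restrict (Ico (-ε) ε) := by
  have hlin : ∀ t, 0 ≤ t → t ≤ 2 * ε →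
      ρ.real (Ico (-ε) (-ε + t)) = t / (2 * ε) * ρ.real (Ico (-ε) ε) := by
    intro t ht0 ht
    have h := linear_of_additive (L := 2 * ε) (by positivity)
      (fun t => ρ.real (Ico (-ε) (-ε + t))) (fun _ => measureReal_nonneg) ?_ ht0 ht
    · have e : -ε + 2 * ε = ε := by ring
      simpa only [e] using h
    · intro s t hs ht hst
      have h1 : ρ.real (Ico (-ε + s) (-ε + (s + t))) = ρ.real (Ico (-ε) (-ε + t)) := by
        have := hρ (-ε) (-ε + t) s le_rfl (by linarith) (by linarith) (by linarith)
        rw [show -ε + t + s = -ε + (s + t) by ring] at this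
        simp only [Measure.real, this]
      show ρ.real (Ico (-ε) (-ε + (s + t))) = _
      rw [← Ico_union_Ico_eq_Ico (b := -ε + s) (by linarith) (by linarith),
        measureReal_union (by
          rw [Set.disjoint_left]; intro x hx hx'; exact absurd hx.2 (not_lt.2 hx'.1))
          measurableSet_Ico, h1]
  have hcut : ∀ T, ρ T = ρ (T ∩ Ico (-ε) ε) := fun T =>
    (measure_inter_conull hsupp).symm
  have hc : (ENNReal.ofReal (2 * ε))⁻¹ * ρ (Ico (-ε) ε)
      = ENNReal.ofReal ((2 * ε)⁻¹ * ρ.real (Ico (-ε) ε)) := by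
    rw [ENNReal.ofReal_mul (p := (2 * ε)⁻¹) (by positivity),
      ENNReal.ofReal_inv_of_pos (by positivity),
      ofReal_measureReal]
  refine Measure.ext_of_Ico _ _ fun a b _ => ?_
  rw [hcut, hc, Measure.smul_apply, Measure.restrict_apply measurableSet_Ico, Ico_inter_Ico,
    Real.volume_Ico, smul_eq_mul]
  obtain ⟨a', ha'⟩ : ∃ a', a' = a ⊔ -ε := ⟨_, rfl⟩
  obtain ⟨b', hb'⟩ : ∃ b', b' = b ⊓ ε := ⟨_, rfl⟩
  rw [← ha', ← hb']
  have ha : -ε ≤ a' := ha' ▸ le_sup_right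
  have hb : b' ≤ ε := hb' ▸ inf_le_right
  rcases le_or_gt a' b' with hab | hab
  · have h1 := hρ (-ε) (-ε + (b' - a')) (a' + ε) le_rfl (by linarith) (by linarith) (by linarith)
    rw [show -ε + (a' + ε) = a' by ring, show -ε + (b' - a') + (a' + ε) = b' by ring] at h1
    rw [h1, ← ofReal_measureReal, hlin _ (by linarith) (by linarith),
      ← ENNReal.ofReal_mul (by positivity)]
    congr 1
    ring
  · rw [Ico_eq_empty (not_lt.2 hab.le), ENNReal.ofReal_of_nonpos (sub_nonpos.2 hab.le)]
    simp


/-- Lemma 2.1 (flow picture): a flow-invariant finite Borel measure factorizes as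
`dt ⊗ μ_Σ` in a flow box around a transversal. -/
theorem flow_invariant_measure_factorizes
    {N : Type*} [TopologicalSpace N] [MeasurableSpace N] [BorelSpace N]
    (φ : ℝ × N → N) (hφcont : Continuous φ)
    (hφ0 : ∀ x, φ (0, x) = x)
    (hφadd : ∀ t s x, φ (t, φ (s, x)) = φ (t + s, x))
    (μ : Measure N) [IsFiniteMeasure μ]
    (hinv : ∀ t : ℝ, Measure.map (fun x => φ (t, x)) μ = μ)
    {Z : Type*} [MeasurableSpace Z] (ε : ℝ) (hε : 0 < ε)
    (j : Z → N) (hj : Measurable j)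
    (ι : ℝ × Z → N) (hι : ∀ t q, ι (t, q) = φ (t, j q))
    (hinj : Set.InjOn ι (Set.Ioo (-(2*ε)) (2*ε) ×ˢ (Set.univ : Set Z)))
    (hmeas : Measurable ι)
    (himage : ∀ A : Set (ℝ × Z), A ⊆ Set.Ioo (-(2*ε)) (2*ε) ×ˢ Set.univ →
      MeasurableSet A → MeasurableSet (ι '' A)) :
    ∃ μSigma : Measure Z, IsFiniteMeasure μSigma ∧
      (∀ B : Set Z, MeasurableSet B →
        μSigma B = (ENNReal.ofReal (2*ε))⁻¹ * μ (ι '' (Set.Ico (-ε) ε ×ˢ B))) ∧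
      ∀ A : Set (ℝ × Z), MeasurableSet A → A ⊆ Set.Ico (-ε) ε ×ˢ Set.univ →
        μ (ι '' A) = (volume.prod μSigma) A := by
  have hbox : Ico (-ε) ε ×ˢ (univ : Set Z) ⊆ Ioo (-(2*ε)) (2*ε) ×ˢ univ :=
    prod_mono (fun x hx => ⟨by linarith [hx.1], by linarith [hx.2]⟩) Subset.rfl
  obtain ⟨S, hS⟩ : ∃ S, S = Ico (-ε) ε ×ˢ (univ : Set Z) := ⟨_, rfl⟩
  rw [← hS] at hbox
  have hSm : MeasurableSet S := hS ▸ measurableSet_Ico.prod MeasurableSet.univ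
  have hemb : MeasurableEmbedding (fun p : S => ι p) := by
    refine ⟨fun p q h => Subtype.ext (hinj (hbox p.2) (hbox q.2) h),
      hmeas.comp measurable_subtype_coe, fun {A} hA => ?_⟩
    have : (fun p : S => ι p) '' A = ι '' (Subtype.val '' A) := by rw [image_image]
    rw [this]
    refine himage _ ?_ (hSm.subtype_image hA)
    rintro _ ⟨p, _, rfl⟩
    exact hbox p.2
  obtain ⟨ν, hν⟩ : ∃ ν : Measure (ℝ × Z), ν = (μ.comap (fun p : S => ι p)).map Subtype.val :=
    ⟨_, rfl⟩
  have hνA : ∀ A, MeasurableSet A → ν A = μ (ι '' (A ∩ S)) := by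
    intro A hA
    rw [hν, Measure.map_apply measurable_subtype_coe hA, hemb.comap_apply]
    congr 1
    have : (fun p : S => ι p) '' (Subtype.val ⁻¹' A) =
        ι '' (Subtype.val '' (Subtype.val ⁻¹' A : Set S)) := by
      rw [image_image]
    rw [this, Subtype.image_preimage_coe, inter_comm]
  have : IsFiniteMeasure ν := ⟨by
    rw [hνA _ MeasurableSet.univ]; exact measure_lt_top _ _⟩
  have hshift : ∀ (B : Set Z), MeasurableSet B → ∀ a b s, -ε ≤ a → b ≤ ε → -ε ≤ a + s →
      b + s ≤ ε → ν (Ico (a + s) (b + s) ×ˢ B) = ν (Ico a b ×ˢ B) := by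
    intro B hB a b s ha hb has hbs
    have hsub : ∀ a b, -ε ≤ a → b ≤ ε → Ico a b ×ˢ B ⊆ S := fun a b ha hb =>
      hS ▸ prod_mono (Ico_subset_Ico ha hb) (subset_univ _)
    rw [hνA _ (measurableSet_Ico.prod hB), hνA _ (measurableSet_Ico.prod hB),
      inter_eq_left.2 (hsub _ _ ha hb), inter_eq_left.2 (hsub _ _ has hbs)]
    have hm : MeasurableSet (ι '' (Ico a b ×ˢ B)) :=
      himage _ ((hsub _ _ ha hb).trans hbox) (measurableSet_Ico.prod hB)
    have hφm : Measurable (fun x => φ (-s, x)) :=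
      (hφcont.comp (Continuous.prodMk_right (-s))).measurable
    -- `ι` intertwines translation by `s` with the flow at time `s`, so the shifted box is the
    -- preimage of the original one under the flow at time `-s`.
    conv_rhs => rw [← hinv (-s), Measure.map_apply hφm hm]
    congr 1
    ext x
    constructor
    · rintro ⟨⟨t, q⟩, ⟨ht, hq⟩, rfl⟩
      refine ⟨(t - s, q), ⟨⟨by linarith [ht.1], by linarith [ht.2]⟩, hq⟩, ?_⟩
      simp only [hι, hφadd]
      congr 2
      ring
    · rintro ⟨⟨t, q⟩, ⟨ht, hq⟩, h⟩
      refine ⟨(t + s, q), ⟨⟨by linarith [ht.1], by linarith [ht.2]⟩, hq⟩, ?_⟩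
      have h2 := congrArg (fun y => φ (s, y)) h
      simp only [hι, hφadd] at h2
      rw [add_neg_cancel, hφ0] at h2
      rw [hι, ← h2, add_comm]
  have hrect : ∀ (T : Set ℝ) (B : Set Z), MeasurableSet T → MeasurableSet B →
      ν (T ×ˢ B) = (ENNReal.ofReal (2 * ε))⁻¹ * ν (Ico (-ε) ε ×ˢ B)
        * volume.restrict (Ico (-ε) ε) T := by
    intro T B hT hB
    -- For fixed `B`, the measure `T ↦ ν (T × B)` is the first marginal of `ν` restricted to
    -- `ℝ × B`.
    have hρ : ∀ T, MeasurableSet T →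
        (ν.restrict (univ ×ˢ B)).map Prod.fst T = ν (T ×ˢ B) := by
      intro T hT
      rw [Measure.map_apply measurable_fst hT, Measure.restrict_apply (measurable_fst hT)]
      congr 1
      ext ⟨t, q⟩
      simp
    have h := eq_smul_volume_of_locally_invariant hε ((ν.restrict (univ ×ˢ B)).map Prod.fst)
      ?_ ?_
    · have h2 := congrArg (fun m : Measure ℝ => m T) h
      simp only [Measure.smul_apply, smul_eq_mul] at h2
      rwa [hρ T hT, hρ _ measurableSet_Ico] at h2
    · rw [hρ _ measurableSet_Ico.compl, hνA _ (measurableSet_Ico.compl.prod hB)]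
      have : (Ico (-ε) ε)ᶜ ×ˢ B ∩ S = ∅ := by
        rw [hS]; ext ⟨t, q⟩
        simp only [mem_inter_iff, mem_prod, mem_compl_iff, mem_empty_iff_false]
        tauto
      rw [this]; simp
    · intro a b s ha hb has hbs
      rw [hρ _ measurableSet_Ico, hρ _ measurableSet_Ico]
      exact hshift B hB a b s ha hb has hbs
  -- As `ν` is carried by the box, the required `μ_Σ` is its normalized second marginal.
  obtain ⟨m, hm⟩ : ∃ m : Measure Z, m = (ENNReal.ofReal (2 * ε))⁻¹ • ν.map Prod.snd := ⟨_, rfl⟩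
  have hcfin : (ENNReal.ofReal (2 * ε))⁻¹ ≠ ⊤ := by
    rw [ENNReal.inv_ne_top]
    exact (ENNReal.ofReal_pos.2 (by positivity)).ne'
  have hmB : ∀ B, MeasurableSet B →
      m B = (ENNReal.ofReal (2 * ε))⁻¹ * ν (Ico (-ε) ε ×ˢ B) := by
    intro B hB
    rw [hm, Measure.smul_apply, smul_eq_mul, Measure.map_apply measurable_snd hB,
      hνA _ (measurable_snd hB), hνA _ (measurableSet_Ico.prod hB)]
    congr 3
    rw [hS]
    ext ⟨t, q⟩
    simp only [mem_inter_iff, mem_preimage, mem_prod, mem_univ]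
    tauto
  have hmfin : IsFiniteMeasure m := by
    rw [hm]; exact Measure.smul_finite _ hcfin
  have hprod : (volume.restrict (Ico (-ε) ε)).prod m = ν := by
    refine Measure.prod_eq fun T B hT hB => ?_
    rw [hrect T B hT hB, hmB B hB, mul_comm]
  refine ⟨m, hmfin, fun B hB => ?_, fun A hA hAS => ?_⟩
  · rw [hmB B hB, hνA _ (measurableSet_Ico.prod hB), inter_eq_left.2]
    rw [hS]
    exact prod_mono Subset.rfl (subset_univ _)
  · rw [← hS] at hAS
    have h1 := hνA A hA
    rw [inter_eq_left.2 hAS] at h1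
    rw [← h1, ← hprod]
    conv_lhs => rw [← Measure.restrict_univ (μ := m)]
    rw [Measure.prod_restrict, Measure.restrict_apply hA, ← hS, inter_eq_left.2 hAS]
end

section
/- Let Σ be a measurable space, ε > 0, and let μ be a finite measure on ℝ × Σ (with the product of the Borel σ-algebra on ℝ and the σ-algebra of Σ) concentrated on (−2ε, 2ε) × Σ, i.e. μ((ℝ ∖ (−2ε,2ε)) × Σ) = 0. Assume μ is invariant under time translations where defined: for every t ∈ ℝ and every measurable E ⊆ (−2ε,2ε) × Σ such that the translate E_t := {(s+t, q) : (s,q) ∈ E} is also contained in (−2ε,2ε) × Σ, one has μ(E_t) = μ(E). Then, with μ_Σ the finite measure on Σ defined by μ_Σ(B) := (2ε)^{−1} μ([−ε,ε) × B), one has μ(A) = (λ ⊗ μ_Σ)(A) for every measurable A ⊆ [−ε, ε) × Σ, where λ denotes Lebesgue measure on ℝ. -/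
open MeasureTheory Set

/-!
Fix a measurable `B ⊆ Σ` and put `F x = μ([-ε, -ε + x) × B)` for `0 ≤ x ≤ 2ε`. By translation
invariance `μ([a, b) × B) = F (b - a)` whenever `-ε ≤ a ≤ b ≤ ε`, so `F` is nonnegative and
additive on `[0, 2ε]`. Such a solution of Cauchy's equation is linear
(`eq_linear_of_additive_nonneg`), hence `μ([a, b) × B) = (b - a) μ_Σ(B)`. Half-open intervals
determine a finite measure on `ℝ`, and rectangles determine the product measure; so `μ` and
`λ ⊗ μ_Σ` have the same restriction to `[-ε, ε) × Σ`.
-/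

/-- A nonnegative solution of Cauchy's equation on an interval `[0, L]` is linear: `F` is
determined on the grid of mesh `L / n`, and monotonicity bounds the error off the grid by
`F L / n`. -/
lemma eq_linear_of_additive_nonneg {F : ℝ → ℝ} {L : ℝ} (hL : 0 < L)
    (hadd : ∀ x y, 0 ≤ x → 0 ≤ y → x + y ≤ L → F (x + y) = F x + F y)
    (hnn : ∀ x, 0 ≤ F x) {x : ℝ} (hx0 : 0 ≤ x) (hxL : x ≤ L) :
    F x = x / L * F L := by
  rcases hxL.eq_or_lt with rfl | hxL
  · rw [div_self hL.ne', one_mul]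
  have hmono : ∀ x y, 0 ≤ x → x ≤ y → y ≤ L → F x ≤ F y := by
    intro x y h0 hxy hy
    have h := hadd x (y - x) h0 (by linarith) (by linarith)
    rw [add_sub_cancel] at h
    linarith [hnn (y - x)]
  have hF0 : F 0 = 0 := by
    have h := hadd 0 0 le_rfl le_rfl (by linarith)
    rw [add_zero] at h
    linarith
  have key : ∀ n : ℕ, 0 < n → |F x - x / L * F L| * n ≤ F L := by
    intro n hn
    have hn' : (0 : ℝ) < n := by exact_mod_cast hn
    obtain ⟨h, hh⟩ : ∃ h, h = L / n := ⟨_, rfl⟩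
    have hpos : 0 < h := hh ▸ div_pos hL hn'
    have hnh : n * h = L := by rw [hh]; field_simp
    have grid : ∀ k : ℕ, k ≤ n → F (k * h) = k * F h := by
      intro k
      induction k with
      | zero => intro _; simp [hF0]
      | succ k ih =>
        intro hk
        have hk' : ((k + 1 : ℕ) : ℝ) ≤ n := by exact_mod_cast hk
        have h1 : ((k + 1 : ℕ) : ℝ) * h ≤ L := hnh ▸ mul_le_mul_of_nonneg_right hk' hpos.le
        push_cast at h1 ⊢
        rw [add_mul, one_mul] at h1 ⊢
        rw [hadd _ _ (by positivity) hpos.le h1, ih (by omega)]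
        ring
    have hFL : F L = n * F h := by rw [← hnh, grid n le_rfl]
    have hk1 : (⌊x / h⌋₊ : ℝ) ≤ x / h := Nat.floor_le (by positivity)
    have hk2 : x / h < ⌊x / h⌋₊ + 1 := Nat.lt_floor_add_one _
    have hkn : ⌊x / h⌋₊ < n := by
      rw [Nat.floor_lt (by positivity), div_lt_iff₀ hpos, hnh]
      exact hxL
    generalize ⌊x / h⌋₊ = k at hk1 hk2 hkn
    have hk1' : k * h ≤ x := (le_div_iff₀ hpos).1 hk1
    have hk2' : x ≤ ((k + 1 : ℕ) : ℝ) * h := by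
      push_cast
      exact ((div_lt_iff₀ hpos).1 hk2).le
    have hk3 : ((k + 1 : ℕ) : ℝ) * h ≤ L := by
      rw [← hnh]
      exact mul_le_mul_of_nonneg_right (by exact_mod_cast hkn) hpos.le
    have lo := hmono _ _ (by positivity) hk1' hxL.le
    have hi := hmono _ _ hx0 hk2' hk3
    rw [grid k hkn.le] at lo
    rw [grid (k + 1) hkn] at hi
    push_cast at hi
    have hlin : x / L * F L = x / h * F h := by
      rw [hFL, ← hnh]
      field_simp
    have lo' := mul_le_mul_of_nonneg_right hk1 (hnn h)
    have hi' := mul_le_mul_of_nonneg_right hk2.le (hnn h)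
    have habs : |F x - x / L * F L| ≤ F h := by
      rw [hlin, abs_le]
      constructor <;> linarith
    calc |F x - x / L * F L| * n ≤ F h * n := mul_le_mul_of_nonneg_right habs hn'.le
      _ = F L := by rw [hFL, mul_comm]
  by_contra hne
  have hd : 0 < |F x - x / L * F L| := abs_pos.2 (sub_ne_zero.2 hne)
  obtain ⟨n, hn⟩ := exists_nat_gt (F L / |F x - x / L * F L|)
  have hn0 : 0 < n := by
    have : (0 : ℝ) < n := (div_nonneg (hnn L) hd.le).trans_lt hn
    exact_mod_cast this
  rw [div_lt_iff₀ hd] at hn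
  linarith [key n hn0]

/-- Lemma 2.1 (flow-box coordinates): a finite measure on `ℝ × Σ`, concentrated on the
strip `(-2ε,2ε) × Σ` and invariant under time translations where defined, factorizes as
`dt ⊗ μ_Σ` on `[-ε,ε) × Σ`. -/
theorem translation_invariant_measure_factorizes
    {Z : Type*} [MeasurableSpace Z] (ε : ℝ) (hε : 0 < ε)
    (μ : Measure (ℝ × Z)) [IsFiniteMeasure μ]
    (hconc : μ ((Set.Ioo (-(2*ε)) (2*ε))ᶜ ×ˢ (Set.univ : Set Z)) = 0)
    (hinv : ∀ t : ℝ, ∀ E : Set (ℝ × Z), MeasurableSet E →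
      E ⊆ Set.Ioo (-(2*ε)) (2*ε) ×ˢ Set.univ →
      (fun p : ℝ × Z => (p.1 + t, p.2)) '' E ⊆ Set.Ioo (-(2*ε)) (2*ε) ×ˢ Set.univ →
      μ ((fun p : ℝ × Z => (p.1 + t, p.2)) '' E) = μ E) :
    ∃ μSigma : Measure Z, IsFiniteMeasure μSigma ∧
      (∀ B : Set Z, MeasurableSet B →
        μSigma B = (ENNReal.ofReal (2*ε))⁻¹ * μ (Set.Ico (-ε) ε ×ˢ B)) ∧
      ∀ A : Set (ℝ × Z), MeasurableSet A → A ⊆ Set.Ico (-ε) ε ×ˢ Set.univ →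
        μ A = (volume.prod μSigma) A := by
  have hLpos : 0 < ENNReal.ofReal (2 * ε) := ENNReal.ofReal_pos.2 (by linarith)
  have hI : MeasurableSet (Ico (-ε) ε ×ˢ (univ : Set Z)) := measurableSet_Ico.prod .univ
  have hrect : ∀ (S : Set ℝ) (B : Set Z), S ×ˢ B ∩ Ico (-ε) ε ×ˢ (univ : Set Z)
      = (S ∩ Ico (-ε) ε) ×ˢ B := by
    intro S B
    rw [prod_inter_prod, inter_univ]
  obtain ⟨ν, hν⟩ : ∃ ν : Measure Z, ν = (ENNReal.ofReal (2 * ε))⁻¹ •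
      (μ.restrict (Ico (-ε) ε ×ˢ univ)).map Prod.snd := ⟨_, rfl⟩
  have hνB : ∀ B : Set Z, MeasurableSet B →
      ν B = (ENNReal.ofReal (2 * ε))⁻¹ * μ (Ico (-ε) ε ×ˢ B) := by
    intro B hB
    rw [hν, Measure.smul_apply, smul_eq_mul, Measure.map_apply measurable_snd hB,
      Measure.restrict_apply (measurable_snd hB), ← univ_prod, hrect, univ_inter]
  have hfin : IsFiniteMeasure ν := by
    refine ⟨?_⟩
    rw [hνB _ .univ]
    exact ENNReal.mul_lt_top (ENNReal.inv_lt_top.2 hLpos) (measure_lt_top _ _)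
  refine ⟨ν, hfin, hνB, ?_⟩
  have hshift : ∀ B : Set Z, MeasurableSet B → ∀ a b, -ε ≤ a → a ≤ b → b ≤ ε →
      μ (Ico a b ×ˢ B) = μ (Ico (-ε) (-ε + (b - a)) ×ˢ B) := by
    intro B hB a b ha hab hb
    have himg : (fun p : ℝ × Z => (p.1 + (a + ε), p.2)) '' (Ico (-ε) (-ε + (b - a)) ×ˢ B)
        = Ico a b ×ˢ B := by
      ext ⟨s, q⟩
      simp only [mem_image, mem_prod, mem_Ico, Prod.exists, Prod.mk.injEq]
      constructor
      · rintro ⟨s', q', ⟨⟨h1, h2⟩, h3⟩, rfl, rfl⟩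
        exact ⟨⟨by linarith, by linarith⟩, h3⟩
      · rintro ⟨⟨h1, h2⟩, h3⟩
        exact ⟨s - (a + ε), q, ⟨⟨by linarith, by linarith⟩, h3⟩, by ring, rfl⟩
    have h := hinv (a + ε) (Ico (-ε) (-ε + (b - a)) ×ˢ B) (measurableSet_Ico.prod hB)
      (by
        rintro ⟨s, q⟩ ⟨⟨h1, h2⟩, -⟩
        simp only at h1 h2
        exact ⟨⟨by simp only; linarith, by simp only; linarith⟩, mem_univ _⟩)
      (by
        rw [himg]
        rintro ⟨s, q⟩ ⟨⟨h1, h2⟩, -⟩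
        simp only at h1 h2
        exact ⟨⟨by simp only; linarith, by simp only; linarith⟩, mem_univ _⟩)
    rwa [himg] at h
  have hIco : ∀ B : Set Z, MeasurableSet B → ∀ a b, -ε ≤ a → a ≤ b → b ≤ ε →
      μ (Ico a b ×ˢ B) = ENNReal.ofReal (b - a) * ν B := by
    intro B hB a b ha hab hb
    have hlin := eq_linear_of_additive_nonneg
      (F := fun x => μ.real (Ico (-ε) (-ε + x) ×ˢ B)) (L := 2 * ε) (by linarith)
      (by
        intro x y hx hy hxy
        have hsplit : Ico (-ε) (-ε + (x + y)) ×ˢ B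
            = Ico (-ε) (-ε + x) ×ˢ B ∪ Ico (-ε + x) (-ε + (x + y)) ×ˢ B := by
          rw [← union_prod, Ico_union_Ico_eq_Ico (by linarith) (by linarith)]
        have hdisj : Disjoint (Ico (-ε) (-ε + x) ×ˢ B) (Ico (-ε + x) (-ε + (x + y)) ×ˢ B) :=
          Disjoint.set_prod_left (Ico_disjoint_Ico_same) _ _
        have hs := hshift B hB (-ε + x) (-ε + (x + y)) (by linarith) (by linarith) (by linarith)
        rw [show -ε + (x + y) - (-ε + x) = y by ring] at hs
        rw [hsplit, measureReal_union hdisj (measurableSet_Ico.prod hB)]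
        congr 1
        simp only [measureReal_def, hs])
      (fun x => measureReal_nonneg) (x := b - a) (by linarith) (by linarith)
    rw [show -ε + 2 * ε = ε by ring] at hlin
    rw [hshift B hB a b ha hab hb, hνB B hB, ← ofReal_measureReal, hlin,
      ENNReal.ofReal_mul (div_nonneg (by linarith) (by linarith)), ofReal_measureReal,
      ENNReal.ofReal_div_of_pos (by linarith), ENNReal.div_eq_inv_mul]
    ring
  have hprod : (volume.restrict (Ico (-ε) ε)).prod ν = μ.restrict (Ico (-ε) ε ×ˢ univ) := by
    refine Measure.prod_eq fun S B hS hB => ?_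
    -- For fixed `B`, both sides are finite measures of `S`, compared on half-open intervals.
    have hm : ((μ.restrict (Ico (-ε) ε ×ˢ univ)).restrict (univ ×ˢ B)).map Prod.fst
        = ν B • volume.restrict (Ico (-ε) ε) := by
      refine Measure.ext_of_Ico _ _ fun a b hab => ?_
      rw [Measure.map_apply measurable_fst measurableSet_Ico,
        Measure.restrict_apply (measurable_fst measurableSet_Ico), ← prod_univ,
        prod_inter_prod, inter_univ, univ_inter,
        Measure.restrict_apply (measurableSet_Ico.prod hB), hrect, Ico_inter_Ico,
        Measure.smul_apply, Measure.restrict_apply measurableSet_Ico, Ico_inter_Ico,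
        Real.volume_Ico, smul_eq_mul, mul_comm]
      rcases le_total (a ⊔ -ε) (b ⊓ ε) with h | h
      · exact hIco B hB _ _ le_sup_right h inf_le_right
      · rw [Ico_eq_empty (not_lt.2 h), empty_prod, measure_empty,
          ENNReal.ofReal_of_nonpos (by linarith), zero_mul]
    have h := congrArg (fun m : Measure ℝ => m S) hm
    rw [Measure.map_apply measurable_fst hS, Measure.restrict_apply (measurable_fst hS),
      ← prod_univ, prod_inter_prod, inter_univ, univ_inter, Measure.smul_apply,
      smul_eq_mul, mul_comm] at h
    exact h
  intro A hA hAI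
  have h := congrArg (fun m : Measure (ℝ × Z) => m A) hprod
  have hres : (volume.restrict (Ico (-ε) ε)).prod ν
      = (volume.prod ν).restrict (Ico (-ε) ε ×ˢ univ) := by
    rw [← Measure.prod_restrict, Measure.restrict_univ]
  simp only [hres] at h
  rw [Measure.restrict_apply hA, Measure.restrict_apply hA, inter_eq_left.2 hAI] at h
  exact h.symm
end

section
/- Let d ≥ 1, ε > 0, and let μ be a finite Borel measure on ℝ × ℝ^d concentrated on (−2ε, 2ε) × ℝ^d, i.e. μ((ℝ ∖ (−2ε,2ε)) × ℝ^d) = 0. Assume that ∫ ∂_t F(t,q) dμ(t,q) = 0 for every smooth function F : ℝ × ℝ^d → ℝ with compact support contained in (−2ε,2ε) × ℝ^d. Then there exists a finite Borel measure μ_Σ on ℝ^d, namely μ_Σ(B) = (2ε)^{−1} μ([−ε,ε) × B), such that μ(A) = (λ ⊗ μ_Σ)(A) for every Borel set A ⊆ [−ε, ε) × ℝ^d, where λ denotes Lebesgue measure on ℝ. -/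
open MeasureTheory Set

/-!
The idea is to test the invariance of `μ` on product functions. If `h₁, h₂` are test functions on
`I = (-2ε, 2ε)`, then `h = (∫ h₂) h₁ - (∫ h₁) h₂` has integral zero, so its primitive `H` is again a
test function on `I`; applying the hypothesis to `F (t, q) = H t * g q` gives
`(∫ h₂) ∫ h₁ g dμ = (∫ h₁) ∫ h₂ g dμ` for every test function `g` on `ℝ^d`
(`integral_mul_integral_comm`). Open sets are pointwise limits of test functions supported in them
(`exists_smooth_approx_indicator`), so dominated convergence yields
`λ(V₂) μ(V₁ × U) = λ(V₁) μ(V₂ × U)` for open `V₁, V₂ ⊆ I` and `U ⊆ ℝ^d`. Taking `V₂ = I`, the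
measures `μ` and `λ|_I ⊗ (4ε)⁻¹ μ.snd` agree on open rectangles, a generating π-system, hence
everywhere. The formula for `μ_Σ` in terms of `[-ε, ε) × B` is then read off the factorization.
-/

/-- The indicator of an open set is the pointwise limit of `[0, 1]`-valued smooth functions
compactly supported inside it. -/
lemma exists_smooth_approx_indicator {E : Type*} [NormedAddCommGroup E] [NormedSpace ℝ E]
    [FiniteDimensional ℝ E] {U : Set E} (hU : IsOpen U) :
    ∃ f : ℕ → E → ℝ, (∀ n, ContDiff ℝ (⊤ : ℕ∞) (f n)) ∧ (∀ n, HasCompactSupport (f n)) ∧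
      (∀ n, tsupport (f n) ⊆ U) ∧ (∀ n x, f n x ∈ Icc (0 : ℝ) 1) ∧
      ∀ x, Filter.Tendsto (fun n => f n x) Filter.atTop (nhds (U.indicator 1 x)) := by
  obtain ⟨φ, hφs, hφ, hφr⟩ := hU.exists_contDiff_support_eq (n := ⊤)
  have hφ0 : ∀ x, 0 ≤ φ x := fun x => (hφr (mem_range_self x)).1
  -- `b n` truncates to a ball of radius `n + 2`; the transition factor cuts off where `n φ ≤ 1`.
  let b : ℕ → ContDiffBump (0 : E) := fun n =>
    ⟨n + 1, n + 2, by positivity, by linarith⟩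
  have hsub : ∀ n : ℕ, tsupport (fun x => Real.smoothTransition (n * φ x - 1) * b n x)
      ⊆ {x | 1 ≤ n * φ x} := by
    intro n
    refine closure_minimal ?_ (isClosed_le continuous_const (continuous_const.mul hφ.continuous))
    intro x hx
    by_contra hlt
    simp only [mem_ofPred_eq, not_le] at hlt
    apply hx
    simp only
    rw [Real.smoothTransition.zero_of_nonpos (by linarith), zero_mul]
  refine ⟨fun n x => Real.smoothTransition (n * φ x - 1) * b n x, ?_, ?_, ?_, ?_, ?_⟩
  · intro n
    exact (Real.smoothTransition.contDiff.comp
      ((contDiff_const.mul hφ).sub contDiff_const)).mul (b n).contDiff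
  · intro n
    exact (b n).hasCompactSupport.mul_left
  · intro n x hx
    have h1 : 1 ≤ n * φ x := hsub n hx
    rw [← hφs]
    intro h0
    rw [h0] at h1
    norm_num at h1
  · intro n x
    have := Real.smoothTransition.nonneg (n * φ x - 1)
    have := Real.smoothTransition.le_one (n * φ x - 1)
    have := (b n).nonneg (x := x)
    have := (b n).le_one (x := x)
    exact ⟨by positivity, by nlinarith⟩
  · intro x
    by_cases hx : x ∈ U
    · rw [indicator_of_mem hx]
      have hpos : 0 < φ x := by
        rw [← hφs] at hx
        exact lt_of_le_of_ne (hφ0 x) (Ne.symm hx)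
      obtain ⟨N, hN⟩ := exists_nat_ge (2 / φ x)
      obtain ⟨M, hM⟩ := exists_nat_ge ‖x‖
      refine tendsto_const_nhds.congr' ?_
      filter_upwards [Filter.eventually_ge_atTop N, Filter.eventually_ge_atTop M] with n hn hm
      have hn' : (N : ℝ) ≤ n := by exact_mod_cast hn
      have hm' : (M : ℝ) ≤ n := by exact_mod_cast hm
      have h2 : 2 ≤ n * φ x := (div_le_iff₀ hpos).1 (hN.trans hn')
      rw [Real.smoothTransition.one_of_one_le (by linarith), (b n).one_of_mem_closedBall]
      · simp
      · simp only [mem_closedBall_iff_norm, sub_zero, b]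
        linarith
    · rw [indicator_of_notMem hx]
      have h0 : φ x = 0 := by
        rw [← hφs] at hx
        simpa using hx
      simp [h0, Real.smoothTransition.zero_of_nonpos]

/-- A test function on `(-c, c)` with zero integral has a primitive which is again a test function
on `(-c, c)`. -/
lemma exists_primitive_test {c : ℝ} (hc : 0 < c) {h : ℝ → ℝ} (hh : ContDiff ℝ (⊤ : ℕ∞) h)
    (hcs : HasCompactSupport h) (hs : tsupport h ⊆ Ioo (-c) c) (hint : ∫ t, h t = 0) :
    ∃ H : ℝ → ℝ, ContDiff ℝ (⊤ : ℕ∞) H ∧ HasCompactSupport H ∧ tsupport H ⊆ Ioo (-c) c ∧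
      ∀ t, HasDerivAt H (h t) t := by
  obtain ⟨a, b, ha, hb, hab⟩ : ∃ a b, -c < a ∧ b < c ∧ tsupport h ⊆ Icc a b := by
    rcases (tsupport h).eq_empty_or_nonempty with he | hne
    · exact ⟨0, 0, by linarith, hc, by simp [he]⟩
    · exact ⟨sInf (tsupport h), sSup (tsupport h), (hs (hcs.isCompact.sInf_mem hne)).1,
        (hs (hcs.isCompact.sSup_mem hne)).2, fun x hx =>
        ⟨csInf_le hcs.isCompact.bddBelow hx, le_csSup hcs.isCompact.bddAbove hx⟩⟩
  have hz : ∀ t, t ∉ Icc a b → h t = 0 := fun t ht =>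
    image_eq_zero_of_notMem_tsupport fun h' => ht (hab h')
  have hder : ∀ t, HasDerivAt (fun u => ∫ x in (-c)..u, h x) (h t) t := fun t =>
    (hh.continuous.integral_hasStrictDerivAt (-c) t).hasDerivAt
  have hsupp : tsupport (fun u => ∫ x in (-c)..u, h x) ⊆ Icc a b := by
    refine closure_minimal ?_ isClosed_Icc
    intro u hu
    by_contra hn
    apply hu
    simp only [mem_Icc, not_and_or, not_le] at hn
    rcases hn with hn | hn
    · refine intervalIntegral.integral_zero_ae (Filter.Eventually.of_forall fun x hx => hz x ?_)
      intro hx'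
      have : x ≤ max (-c) u := hx.2
      rcases max_choice (-c) u with h' | h' <;> rw [h'] at this <;> linarith [hx'.1]
    · -- right of the support, the primitive equals the full integral
      show ∫ x in (-c)..u, h x = 0
      by_cases hcu : -c ≤ u
      · rw [intervalIntegral.integral_of_le hcu, ← hint]
        refine setIntegral_eq_integral_of_forall_compl_eq_zero fun x hx => hz x fun hx' => hx ?_
        exact ⟨ha.trans_le hx'.1, hx'.2.trans hn.le⟩
      · refine intervalIntegral.integral_zero_ae (Filter.Eventually.of_forall fun x hx => hz x ?_)
        intro hx'
        have : x ≤ max (-c) u := hx.2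
        rw [max_eq_left (not_le.1 hcu).le] at this
        linarith [hx'.1]
  refine ⟨fun u => ∫ x in (-c)..u, h x, ?_, ?_, ?_, hder⟩
  · rw [contDiff_infty_iff_deriv]
    refine ⟨fun t => (hder t).differentiableAt, ?_⟩
    rwa [show deriv (fun u => ∫ x in (-c)..u, h x) = h from funext fun t => (hder t).deriv]
  · exact HasCompactSupport.of_support_subset_isCompact isCompact_Icc
      ((subset_tsupport _).trans hsupp)
  · exact hsupp.trans fun x hx => ⟨ha.trans_le hx.1, hx.2.trans_lt hb⟩

/-- A product of continuous compactly supported functions in the two variables is integrable. -/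
lemma integrable_mul_test {d : ℕ} (μ : Measure (ℝ × (Fin d → ℝ))) [IsFiniteMeasure μ]
    {h : ℝ → ℝ} {g : (Fin d → ℝ) → ℝ} (hh : Continuous h) (hhc : HasCompactSupport h)
    (hg : Continuous g) (hgc : HasCompactSupport g) :
    Integrable (fun p : ℝ × (Fin d → ℝ) => h p.1 * g p.2) μ := by
  obtain ⟨A, hA⟩ := hhc.exists_bound_of_continuous hh
  obtain ⟨B, hB⟩ := hgc.exists_bound_of_continuous hg
  refine Integrable.of_bound (C := A * B) (by fun_prop) (Filter.Eventually.of_forall fun p => ?_)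
  rw [norm_mul]
  exact mul_le_mul (hA _) (hB _) (norm_nonneg _) ((norm_nonneg _).trans (hA 0))

/-- If `∂_t` annihilates `μ`, then `∫ h(t) g(q) dμ` depends on the test function `h` only through
its Lebesgue integral, to which it is proportional. -/
lemma integral_mul_integral_comm {d : ℕ} {c : ℝ} (hc : 0 < c)
    (μ : Measure (ℝ × (Fin d → ℝ))) [IsFiniteMeasure μ]
    (hinv : ∀ F : ℝ × (Fin d → ℝ) → ℝ, ContDiff ℝ (⊤ : ℕ∞) F → HasCompactSupport F →
      tsupport F ⊆ Set.Ioo (-c) c ×ˢ Set.univ →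
      ∫ p, deriv (fun s => F (s, p.2)) p.1 ∂μ = 0)
    {h₁ h₂ : ℝ → ℝ} {g : (Fin d → ℝ) → ℝ}
    (h₁d : ContDiff ℝ (⊤ : ℕ∞) h₁) (h₁c : HasCompactSupport h₁) (h₁s : tsupport h₁ ⊆ Ioo (-c) c)
    (h₂d : ContDiff ℝ (⊤ : ℕ∞) h₂) (h₂c : HasCompactSupport h₂) (h₂s : tsupport h₂ ⊆ Ioo (-c) c)
    (gd : ContDiff ℝ (⊤ : ℕ∞) g) (gc : HasCompactSupport g) :
    (∫ t, h₂ t) * ∫ p, h₁ p.1 * g p.2 ∂μ = (∫ t, h₁ t) * ∫ p, h₂ p.1 * g p.2 ∂μ := by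
  set I₁ := ∫ t, h₁ t with hI₁
  set I₂ := ∫ t, h₂ t with hI₂
  have i₁ : Integrable h₁ := h₁d.continuous.integrable_of_hasCompactSupport h₁c
  have i₂ : Integrable h₂ := h₂d.continuous.integrable_of_hasCompactSupport h₂c
  have c₁ : HasCompactSupport (fun t => I₂ * h₁ t) := h₁c.mul_left
  have c₂ : HasCompactSupport (fun t => I₁ * h₂ t) := h₂c.mul_left
  obtain ⟨H, Hd, Hc, Hs, Hder⟩ := exists_primitive_test (h := fun t => I₂ * h₁ t - I₁ * h₂ t) hc
    ((contDiff_const.mul h₁d).sub (contDiff_const.mul h₂d)) (c₁.sub c₂)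
    (by
      refine (tsupport_sub _ _).trans (union_subset ?_ ?_)
      · exact (tsupport_mul_subset_right).trans h₁s
      · exact (tsupport_mul_subset_right).trans h₂s)
    (by
      rw [integral_sub (i₁.const_mul _) (i₂.const_mul _), integral_const_mul, integral_const_mul,
        ← hI₁, ← hI₂]
      ring)
  have hsub : tsupport (fun p : ℝ × (Fin d → ℝ) => H p.1 * g p.2) ⊆ tsupport H ×ˢ tsupport g := by
    refine closure_minimal ?_ ((isClosed_tsupport _).prod (isClosed_tsupport _))
    intro p hp
    exact ⟨subset_tsupport _ (left_ne_zero_of_mul hp), subset_tsupport _ (right_ne_zero_of_mul hp)⟩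
  have key := hinv (fun p => H p.1 * g p.2)
    ((Hd.comp contDiff_fst).mul (gd.comp contDiff_snd))
    (HasCompactSupport.of_support_subset_isCompact (Hc.isCompact.prod gc.isCompact)
      ((subset_tsupport _).trans hsub))
    (hsub.trans (prod_mono Hs (subset_univ _)))
  have hd : ∀ p : ℝ × (Fin d → ℝ), deriv (fun s => H s * g p.2) p.1
      = I₂ * (h₁ p.1 * g p.2) - I₁ * (h₂ p.1 * g p.2) := by
    intro p
    rw [((Hder p.1).mul_const (g p.2)).deriv]
    ring
  simp only [hd] at key
  rw [integral_sub, integral_const_mul, integral_const_mul] at key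
  · linarith
  · exact (integrable_mul_test μ h₁d.continuous h₁c gd.continuous gc).const_mul _
  · exact (integrable_mul_test μ h₂d.continuous h₂c gd.continuous gc).const_mul _

/-- The passage from test functions to open rectangles. -/
lemma volume_mul_measure_comm {d : ℕ} {c : ℝ} (hc : 0 < c)
    (μ : Measure (ℝ × (Fin d → ℝ))) [IsFiniteMeasure μ]
    (hinv : ∀ F : ℝ × (Fin d → ℝ) → ℝ, ContDiff ℝ (⊤ : ℕ∞) F → HasCompactSupport F →
      tsupport F ⊆ Set.Ioo (-c) c ×ˢ Set.univ →
      ∫ p, deriv (fun s => F (s, p.2)) p.1 ∂μ = 0)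
    {V₁ V₂ : Set ℝ} {U : Set (Fin d → ℝ)} (hV₁ : IsOpen V₁) (hV₂ : IsOpen V₂) (hU : IsOpen U)
    (s₁ : V₁ ⊆ Ioo (-c) c) (s₂ : V₂ ⊆ Ioo (-c) c) :
    volume.real V₂ * μ.real (V₁ ×ˢ U) = volume.real V₁ * μ.real (V₂ ×ˢ U) := by
  obtain ⟨g, gd, gc, gs, gr, gt⟩ := exists_smooth_approx_indicator hU
  have lim_vol : ∀ {V : Set ℝ} {h : ℕ → ℝ → ℝ}, IsOpen V → V ⊆ Ioo (-c) c →
      (∀ n, ContDiff ℝ (⊤ : ℕ∞) (h n)) → (∀ n, tsupport (h n) ⊆ V) →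
      (∀ n x, h n x ∈ Icc (0 : ℝ) 1) →
      (∀ x, Filter.Tendsto (fun n => h n x) Filter.atTop (nhds (V.indicator 1 x))) →
      Filter.Tendsto (fun n => ∫ t, h n t) Filter.atTop (nhds (volume.real V)) := by
    intro V h hV sV hd hs hr ht
    rw [← integral_indicator_one hV.measurableSet]
    refine tendsto_integral_of_dominated_convergence ((Ioo (-c) c).indicator 1)
      (fun n => (hd n).continuous.aestronglyMeasurable) ?_ ?_ (Filter.Eventually.of_forall ht)
    · exact (integrable_indicator_iff measurableSet_Ioo).2 (integrableOn_const (by simp))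
    · intro n
      refine Filter.Eventually.of_forall fun x => ?_
      by_cases hx : x ∈ Ioo (-c) c
      · rw [indicator_of_mem hx, Real.norm_of_nonneg (hr n x).1]
        exact (hr n x).2
      · rw [indicator_of_notMem hx,
          image_eq_zero_of_notMem_tsupport fun h' => hx (sV (hs n h')), norm_zero]
  have lim_μ : ∀ {V : Set ℝ} {h : ℕ → ℝ → ℝ}, IsOpen V →
      (∀ n, ContDiff ℝ (⊤ : ℕ∞) (h n)) →
      (∀ n x, h n x ∈ Icc (0 : ℝ) 1) →
      (∀ x, Filter.Tendsto (fun n => h n x) Filter.atTop (nhds (V.indicator 1 x))) →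
      Filter.Tendsto (fun n => ∫ p, h n p.1 * g n p.2 ∂μ) Filter.atTop
        (nhds (μ.real (V ×ˢ U))) := by
    intro V h hV hd hr ht
    rw [← integral_indicator_one (hV.prod hU).measurableSet]
    refine tendsto_integral_of_dominated_convergence (fun _ => 1) ?_ (integrable_const _) ?_ ?_
    · intro n
      have := (hd n).continuous
      have := (gd n).continuous
      exact Continuous.aestronglyMeasurable (by fun_prop)
    · intro n
      refine Filter.Eventually.of_forall fun p => ?_
      rw [Real.norm_of_nonneg (mul_nonneg (hr n _).1 (gr n _).1)]
      exact mul_le_one₀ (hr n _).2 (gr n _).1 (gr n _).2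
    · refine Filter.Eventually.of_forall fun p => ?_
      have : (V ×ˢ U).indicator (1 : ℝ × (Fin d → ℝ) → ℝ) p
          = V.indicator 1 p.1 * U.indicator 1 p.2 := by
        by_cases h1 : p.1 ∈ V <;> by_cases h2 : p.2 ∈ U <;> simp [indicator, h1, h2]
      rw [this]
      exact (ht p.1).mul (gt p.2)
  obtain ⟨f, fd, fc, fs, fr, ft⟩ := exists_smooth_approx_indicator hV₁
  obtain ⟨k, kd, kc, ks, kr, kt⟩ := exists_smooth_approx_indicator hV₂
  refine tendsto_nhds_unique
    ((lim_vol hV₂ s₂ kd ks kr kt).mul (lim_μ hV₁ fd fr ft)) ?_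
  refine ((lim_vol hV₁ s₁ fd fs fr ft).mul (lim_μ hV₂ kd kr kt)).congr fun n => ?_
  exact (integral_mul_integral_comm hc μ hinv (fd n) (fc n) ((fs n).trans s₁)
    (kd n) (kc n) ((ks n).trans s₂) (gd n) (gc n)).symm

/-- An invariant measure on the strip is globally the product of Lebesgue measure on the interval
with its normalized marginal. -/
lemma restrict_prod_snd_eq {d : ℕ} {c : ℝ} (hc : 0 < c)
    (μ : Measure (ℝ × (Fin d → ℝ))) [IsFiniteMeasure μ]
    (hconc : μ ((Set.Ioo (-c) c)ᶜ ×ˢ (Set.univ : Set (Fin d → ℝ))) = 0)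
    (hinv : ∀ F : ℝ × (Fin d → ℝ) → ℝ, ContDiff ℝ (⊤ : ℕ∞) F → HasCompactSupport F →
      tsupport F ⊆ Set.Ioo (-c) c ×ˢ Set.univ →
      ∫ p, deriv (fun s => F (s, p.2)) p.1 ∂μ = 0)
    (κ : Measure (Fin d → ℝ)) [IsFiniteMeasure κ]
    (hκ : κ = (ENNReal.ofReal (2 * c))⁻¹ • μ.snd) :
    (volume.restrict (Ioo (-c) c)).prod κ = μ := by
  have hcut : ∀ (V : Set ℝ) (U : Set (Fin d → ℝ)),
      μ (V ×ˢ U) = μ ((V ∩ Ioo (-c) c) ×ˢ U) := by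
    intro V U
    refine measure_congr ?_
    have : ∀ᵐ p ∂μ, p ∉ (Ioo (-c) c)ᶜ ×ˢ (univ : Set (Fin d → ℝ)) :=
      measure_eq_zero_iff_ae_notMem.1 hconc
    filter_upwards [this] with p hp
    have hp' : p.1 ∈ Ioo (-c) c := by simpa using hp
    change ((p ∈ V ×ˢ U) = (p ∈ (V ∩ Ioo (-c) c) ×ˢ U))
    simp only [mem_prod, mem_inter_iff, hp', and_true]
  have hopen {X : Type} [TopologicalSpace X] [MeasurableSpace X] (ν : Measure X)
      [IsFiniteMeasure ν] : ν.FiniteSpanningSetsIn {s : Set X | IsOpen s} :=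
    ⟨fun _ => univ, fun _ => isOpen_univ, fun _ => measure_lt_top _ _, iUnion_const univ⟩
  refine Measure.prod_eq_generateFrom (C := {s | IsOpen s}) (D := {s | IsOpen s})
    (BorelSpace.measurable_eq (α := ℝ)).symm (BorelSpace.measurable_eq (α := Fin d → ℝ)).symm
    isPiSystem_isOpen isPiSystem_isOpen (hopen _) (hopen _) ?_
  intro V hV U hU
  have hV : IsOpen V := hV
  have hU : IsOpen U := hU
  have key := volume_mul_measure_comm hc μ hinv (hV.inter (isOpen_Ioo (a := -c) (b := c)))
    (isOpen_Ioo (a := -c) (b := c)) hU inter_subset_right subset_rfl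
  have hfin : volume (V ∩ Ioo (-c) c) ≠ ⊤ :=
    ((measure_mono inter_subset_right).trans_lt (by simp)).ne
  have hI : volume (Ioo (-c) c) = ENNReal.ofReal (2 * c) := by
    rw [Real.volume_Ioo]
    ring_nf
  have key' : ENNReal.ofReal (2 * c) * μ (V ×ˢ U) = volume (V ∩ Ioo (-c) c) * μ (univ ×ˢ U) := by
    rw [hcut V U, hcut univ U, univ_inter, ← hI,
      ← ENNReal.toReal_eq_toReal_iff' (ENNReal.mul_ne_top (by simp) (measure_ne_top _ _))
        (ENNReal.mul_ne_top hfin (measure_ne_top _ _)), ENNReal.toReal_mul, ENNReal.toReal_mul]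
    exact key
  have h0 : ENNReal.ofReal (2 * c) ≠ 0 := by simp [hc]
  rw [Measure.restrict_apply hV.measurableSet, hκ, Measure.smul_apply,
    Measure.snd_apply hU.measurableSet, smul_eq_mul, ← univ_prod, mul_left_comm, ← key', ← mul_assoc,
    ENNReal.inv_mul_cancel h0 ENNReal.ofReal_ne_top, one_mul]

/-- Lemma 2.1 (distributional form, in a chart `Σ = ℝ^d`): a finite Borel measure on
`ℝ × ℝ^d` concentrated on the strip `(-2ε,2ε) × ℝ^d` and annihilated by `∂_t`
factorizes as `dt ⊗ μ_Σ` on `[-ε,ε) × ℝ^d`. -/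
theorem dt_invariant_measure_factorizes
    (d : ℕ) (hd : 1 ≤ d) (ε : ℝ) (hε : 0 < ε)
    (μ : Measure (ℝ × (Fin d → ℝ))) [IsFiniteMeasure μ]
    (hconc : μ ((Set.Ioo (-(2*ε)) (2*ε))ᶜ ×ˢ (Set.univ : Set (Fin d → ℝ))) = 0)
    (hinv : ∀ F : ℝ × (Fin d → ℝ) → ℝ, ContDiff ℝ (⊤ : ℕ∞) F → HasCompactSupport F →
      tsupport F ⊆ Set.Ioo (-(2*ε)) (2*ε) ×ˢ Set.univ →
      ∫ p, deriv (fun s => F (s, p.2)) p.1 ∂μ = 0) :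
    ∃ μSigma : Measure (Fin d → ℝ), IsFiniteMeasure μSigma ∧
      (∀ B : Set (Fin d → ℝ), MeasurableSet B →
        μSigma B = (ENNReal.ofReal (2*ε))⁻¹ * μ (Set.Ico (-ε) ε ×ˢ B)) ∧
      ∀ A : Set (ℝ × (Fin d → ℝ)), MeasurableSet A → A ⊆ Set.Ico (-ε) ε ×ˢ Set.univ →
        μ A = (volume.prod μSigma) A := by
  have hc : 0 < 2 * ε := by positivity
  have hκfin : IsFiniteMeasure ((ENNReal.ofReal (2 * (2 * ε)))⁻¹ • μ.snd) :=
    Measure.smul_finite _ (by simp [hε])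
  have hμ := restrict_prod_snd_eq hc μ hconc hinv _ rfl
  set κ := (ENNReal.ofReal (2 * (2 * ε)))⁻¹ • μ.snd
  have hIco : Ico (-ε) ε ⊆ Ioo (-(2 * ε)) (2 * ε) := fun x hx =>
    ⟨by linarith [hx.1], by linarith [hx.2]⟩
  have hA : ∀ A : Set (ℝ × (Fin d → ℝ)), MeasurableSet A → A ⊆ Set.Ico (-ε) ε ×ˢ Set.univ →
      μ A = (volume.prod κ) A := by
    intro A hA hsub
    conv_lhs => rw [← hμ]
    conv_lhs => rw [← Measure.restrict_univ (μ := κ), Measure.prod_restrict,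
      Measure.restrict_apply hA, inter_eq_left.2 (hsub.trans (prod_mono hIco subset_rfl))]
  refine ⟨κ, hκfin, fun B hB => ?_, hA⟩
  have h0 : ENNReal.ofReal (2 * ε) ≠ 0 := by simp [hε]
  rw [hA _ (measurableSet_Ico.prod hB) (prod_mono subset_rfl (subset_univ _)), Measure.prod_prod,
    Real.volume_Ico, show ε - -ε = 2 * ε by ring, ← mul_assoc,
    ENNReal.inv_mul_cancel h0 ENNReal.ofReal_ne_top, one_mul]
end

section
/- Let d ≥ 1, ε > 0, and let μ be a finite Borel measure on ℝ × ℝ^d concentrated on (−2ε, 2ε) × ℝ^d, i.e. μ((ℝ ∖ (−2ε,2ε)) × ℝ^d) = 0. Assume that for every smooth f : ℝ × ℝ^d → ℝ with compact support contained in (−2ε,2ε) × ℝ^d and every smooth χ : ℝ → ℝ with compact support contained in (−2ε,2ε) and ∫_ℝ χ(t) dt = 1 one has ∫ f(t,q) dμ(t,q) = ∫ χ(t) ( ∫_ℝ f(s,q) ds ) dμ(t,q). Then for every closed interval [a,b] ⊆ (−2ε, 2ε) and every Borel set B ⊆ ℝ^d, μ([a,b] × B) = (b − a) · (2ε)^{−1}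 · μ([−ε,ε] × B). -/
/-!
Testing the hypothesis with `f (t, q) = g t * h q` and `χ = ψ / ∫ ψ` gives
`(∫ ψ) * ∫ g t * h q ∂μ = (∫ g) * ∫ ψ t * h q ∂μ` for smooth cutoffs `g`, `ψ`, `h`
(`integral_product_cutoff`). For compact `I = [a, b]`, `J = [-ε, ε]` and `K ⊆ ℝ^d`, the cutoffs are
chosen with values in `[0, 1]` and equal to `1` exactly on `I`, `J`, `K` (`exists_smooth_cutoff`).
Their powers then converge pointwise to the indicator functions, so dominated convergence gives
`2ε * μ (I × K) = (b - a) * μ (J × K)`. Both sides are finite Borel measures in `K`, hence inner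
regular, and two such measures that agree on compact sets agree on all Borel sets.
-/

open MeasureTheory Set Filter Topology
open scoped Manifold ContDiff

/-- A smooth cutoff equal to `1` exactly on `K`; the exactness is what makes its powers converge to
the indicator function of `K`. -/
lemma exists_smooth_cutoff {E : Type*} [NormedAddCommGroup E] [NormedSpace ℝ E]
    [FiniteDimensional ℝ E] {K U : Set E} (hK : IsCompact K) (hU : IsOpen U) (hKU : K ⊆ U) :
    ∃ φ : E → ℝ, ContDiff ℝ (⊤ : ℕ∞) φ ∧ HasCompactSupport φ ∧ tsupport φ ⊆ U ∧
      (∀ x, φ x ∈ Icc (0 : ℝ) 1) ∧ ∀ x, φ x = 1 ↔ x ∈ K := by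
  have : ProperSpace E := FiniteDimensional.proper ℝ E
  obtain ⟨L, hL, hKL, hLU⟩ := exists_compact_between hK hU hKU
  obtain ⟨φ, hφ, hr, hs, h1⟩ := exists_contMDiff_support_eq_eq_one_iff (n := (⊤ : ℕ∞)) 𝓘(ℝ, E)
    (isOpen_interior (s := L)) hK.isClosed hKL
  have hsub : tsupport φ ⊆ L := by
    rw [tsupport, hs]
    exact closure_minimal interior_subset hL.isClosed
  exact ⟨φ, hφ.contDiff, hL.of_isClosed_subset (isClosed_tsupport φ) hsub, hsub.trans hLU,
    fun x => hr (mem_range_self x), fun x => (h1 x).symm⟩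

lemma tendsto_integral_pow {α : Type*} [MeasurableSpace α] {μ : Measure α} {φ : α → ℝ}
    (hm : Measurable φ) (hi : Integrable φ μ) (h01 : ∀ x, φ x ∈ Icc (0 : ℝ) 1) :
    Tendsto (fun n : ℕ => ∫ x, φ x ^ (n + 1) ∂μ) atTop (𝓝 (μ.real {x | φ x = 1})) := by
  have hS : MeasurableSet {x | φ x = 1} := hm (measurableSet_singleton 1)
  rw [← integral_indicator_one hS]
  refine tendsto_integral_of_dominated_convergence φ
    (fun n => (hm.pow_const _).aestronglyMeasurable) hi (fun n => ae_of_all _ fun x => ?_)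
    (ae_of_all _ fun x => ?_)
  · rw [Real.norm_of_nonneg (pow_nonneg (h01 x).1 _)]
    exact pow_le_of_le_one (h01 x).1 (h01 x).2 (Nat.succ_ne_zero n)
  · by_cases hx : φ x = 1
    · simp [hx]
    · rw [indicator_of_notMem (by exact hx)]
      exact (tendsto_pow_atTop_nhds_zero_of_lt_one (h01 x).1
        (lt_of_le_of_ne (h01 x).2 hx)).comp (tendsto_add_atTop_nat 1)

lemma tsupport_pow_subset {E : Type*} [TopologicalSpace E] (φ : E → ℝ) (n : ℕ) :
    tsupport (fun x => φ x ^ (n + 1)) ⊆ tsupport φ :=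
  closure_mono fun x hx hx0 => hx (by simp [hx0])

lemma hasCompactSupport_pow {E : Type*} [TopologicalSpace E] {φ : E → ℝ}
    (hφ : HasCompactSupport φ) (n : ℕ) : HasCompactSupport fun x => φ x ^ (n + 1) :=
  IsCompact.of_isClosed_subset hφ (isClosed_tsupport _) (tsupport_pow_subset φ n)

/-- The test identity for products, in a form without the normalization of the cutoff in `t`. -/
lemma integral_product_cutoff {E : Type*} [NormedAddCommGroup E] [NormedSpace ℝ E]
    [MeasurableSpace E] {μ : Measure (ℝ × E)} {V : Set ℝ}
    (htest : ∀ f : ℝ × E → ℝ, ContDiff ℝ (⊤ : ℕ∞) f → HasCompactSupport f →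
      tsupport f ⊆ V ×ˢ Set.univ →
      ∀ χ : ℝ → ℝ, ContDiff ℝ (⊤ : ℕ∞) χ → HasCompactSupport χ →
        tsupport χ ⊆ V → (∫ t, χ t) = 1 →
        ∫ p, f p ∂μ = ∫ p, χ p.1 * (∫ s, f (s, p.2)) ∂μ)
    {g ψ : ℝ → ℝ} {h : E → ℝ}
    (hg : ContDiff ℝ (⊤ : ℕ∞) g) (hgc : HasCompactSupport g) (hgV : tsupport g ⊆ V)
    (hψ : ContDiff ℝ (⊤ : ℕ∞) ψ) (hψc : HasCompactSupport ψ) (hψV : tsupport ψ ⊆ V)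
    (hh : ContDiff ℝ (⊤ : ℕ∞) h) (hhc : HasCompactSupport h) (hψ0 : ∫ t, ψ t ≠ 0) :
    (∫ t, ψ t) * ∫ p, g p.1 * h p.2 ∂μ = (∫ t, g t) * ∫ p, ψ p.1 * h p.2 ∂μ := by
  have hsub : tsupport (fun p : ℝ × E => g p.1 * h p.2) ⊆ tsupport g ×ˢ tsupport h := by
    refine closure_minimal (fun p hp => ?_) ((isClosed_tsupport g).prod (isClosed_tsupport h))
    exact ⟨subset_tsupport g (left_ne_zero_of_mul hp), subset_tsupport h (right_ne_zero_of_mul hp)⟩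
  have hψsub : tsupport (fun t => (∫ t, ψ t)⁻¹ * ψ t) ⊆ tsupport ψ :=
    closure_mono fun t ht => right_ne_zero_of_mul ht
  have key := htest (fun p => g p.1 * h p.2)
    ((hg.comp contDiff_fst).mul (hh.comp contDiff_snd))
    ((hgc.isCompact.prod hhc.isCompact).of_isClosed_subset (isClosed_tsupport _) hsub)
    (hsub.trans (prod_mono hgV (subset_univ _)))
    (fun t => (∫ t, ψ t)⁻¹ * ψ t) (contDiff_const.mul hψ)
    (hψc.isCompact.of_isClosed_subset (isClosed_tsupport _) hψsub) (hψsub.trans hψV)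
    (by rw [integral_const_mul, inv_mul_cancel₀ hψ0])
  rw [key, ← integral_const_mul, ← integral_const_mul]
  congr 1 with p
  dsimp only
  rw [integral_mul_const]
  field_simp

/-- The rectangle formula for compact sets `I`, `J`, `K`, with the length of `J` cleared from the
denominator. -/
lemma real_measure_rectangle_of_isCompact {E : Type*} [NormedAddCommGroup E] [NormedSpace ℝ E]
    [FiniteDimensional ℝ E] [MeasurableSpace E] [BorelSpace E]
    {μ : Measure (ℝ × E)} [IsFiniteMeasure μ] {V : Set ℝ} (hV : IsOpen V)
    (htest : ∀ f : ℝ × E → ℝ, ContDiff ℝ (⊤ : ℕ∞) f → HasCompactSupport f →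
      tsupport f ⊆ V ×ˢ Set.univ →
      ∀ χ : ℝ → ℝ, ContDiff ℝ (⊤ : ℕ∞) χ → HasCompactSupport χ →
        tsupport χ ⊆ V → (∫ t, χ t) = 1 →
        ∫ p, f p ∂μ = ∫ p, χ p.1 * (∫ s, f (s, p.2)) ∂μ)
    {I J : Set ℝ} {K : Set E} (hI : IsCompact I) (hIV : I ⊆ V) (hJ : IsCompact J) (hJV : J ⊆ V)
    (hJ0 : volume.real J ≠ 0) (hK : IsCompact K) :
    volume.real J * μ.real (I ×ˢ K) = volume.real I * μ.real (J ×ˢ K) := by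
  obtain ⟨g, hg, hgc, hgV, hg01, hg1⟩ := exists_smooth_cutoff hI hV hIV
  obtain ⟨ψ, hψ, hψc, hψV, hψ01, hψ1⟩ := exists_smooth_cutoff hJ hV hJV
  obtain ⟨h, hh, hhc, -, hh01, hh1⟩ := exists_smooth_cutoff hK isOpen_univ (subset_univ K)
  have lim1 : ∀ {u : ℝ → ℝ} {S : Set ℝ}, ContDiff ℝ (⊤ : ℕ∞) u → HasCompactSupport u →
      (∀ x, u x ∈ Icc (0 : ℝ) 1) → (∀ x, u x = 1 ↔ x ∈ S) →
      Tendsto (fun n : ℕ => ∫ t, u t ^ (n + 1)) atTop (𝓝 (volume.real S)) := by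
    intro u S hu huc hu01 hu1
    have := tendsto_integral_pow (μ := volume) hu.continuous.measurable
      (hu.continuous.integrable_of_hasCompactSupport huc) hu01
    rwa [show {x | u x = 1} = S from Set.ext hu1] at this
  have lim2 : ∀ {u : ℝ → ℝ} {S : Set ℝ}, ContDiff ℝ (⊤ : ℕ∞) u →
      (∀ x, u x ∈ Icc (0 : ℝ) 1) → (∀ x, u x = 1 ↔ x ∈ S) →
      Tendsto (fun n : ℕ => ∫ p, u p.1 ^ (n + 1) * h p.2 ^ (n + 1) ∂μ) atTop
        (𝓝 (μ.real (S ×ˢ K))) := by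
    intro u S hu hu01 hu1
    have hm : Measurable fun p : ℝ × E => u p.1 * h p.2 :=
      (hu.continuous.measurable.comp measurable_fst).mul
        (hh.continuous.measurable.comp measurable_snd)
    have h01 : ∀ p : ℝ × E, u p.1 * h p.2 ∈ Icc (0 : ℝ) 1 := fun p =>
      ⟨mul_nonneg (hu01 _).1 (hh01 _).1, mul_le_one₀ (hu01 _).2 (hh01 _).1 (hh01 _).2⟩
    have hint : Integrable (fun p : ℝ × E => u p.1 * h p.2) μ :=
      Integrable.of_bound hm.aestronglyMeasurable 1 (ae_of_all _ fun p => by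
        rw [Real.norm_of_nonneg (h01 p).1]; exact (h01 p).2)
    have := tendsto_integral_pow hm hint h01
    have hset : {p : ℝ × E | u p.1 * h p.2 = 1} = S ×ˢ K := by
      ext p
      rw [mem_prod, ← hu1, ← hh1, mem_ofPred_eq]
      constructor
      · intro hp
        constructor <;> nlinarith [(hu01 p.1).1, (hu01 p.1).2, (hh01 p.2).1, (hh01 p.2).2]
      · rintro ⟨h1, h2⟩
        rw [h1, h2, one_mul]
    rw [hset] at this
    simpa only [mul_pow] using this
  refine tendsto_nhds_unique_of_eventuallyEq ((lim1 hψ hψc hψ01 hψ1).mul (lim2 hg hg01 hg1))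
    ((lim1 hg hgc hg01 hg1).mul (lim2 hψ hψ01 hψ1)) ?_
  filter_upwards [(lim1 hψ hψc hψ01 hψ1).eventually_ne hJ0] with n hn
  exact integral_product_cutoff htest (hg.pow _) (hasCompactSupport_pow hgc n)
    ((tsupport_pow_subset g n).trans hgV) (hψ.pow _) (hasCompactSupport_pow hψc n)
    ((tsupport_pow_subset ψ n).trans hψV) (hh.pow _) (hasCompactSupport_pow hhc n) hn

/-- Passage from the test-function identity to measures of rectangles in the proof of
Lemma 2.1: if testing against any test function equals testing against `χ(t)` times its
`t`-average, then the measure of a rectangle `[a,b] × B` is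
`(b-a) (2ε)⁻¹ μ([-ε,ε] × B)`. -/
theorem measure_of_rectangles_from_test_identity
    (d : ℕ) (hd : 1 ≤ d) (ε : ℝ) (hε : 0 < ε)
    (μ : Measure (ℝ × (Fin d → ℝ))) [IsFiniteMeasure μ]
    (hconc : μ ((Set.Ioo (-(2*ε)) (2*ε))ᶜ ×ˢ (Set.univ : Set (Fin d → ℝ))) = 0)
    (htest : ∀ f : ℝ × (Fin d → ℝ) → ℝ, ContDiff ℝ (⊤ : ℕ∞) f → HasCompactSupport f →
      tsupport f ⊆ Set.Ioo (-(2*ε)) (2*ε) ×ˢ Set.univ →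
      ∀ χ : ℝ → ℝ, ContDiff ℝ (⊤ : ℕ∞) χ → HasCompactSupport χ →
        tsupport χ ⊆ Set.Ioo (-(2*ε)) (2*ε) → (∫ t, χ t) = 1 →
        ∫ p, f p ∂μ = ∫ p, χ p.1 * (∫ s, f (s, p.2)) ∂μ) :
    ∀ a b : ℝ, -(2*ε) < a → a ≤ b → b < 2*ε →
      ∀ B : Set (Fin d → ℝ), MeasurableSet B →
        μ (Set.Icc a b ×ˢ B)
          = ENNReal.ofReal (b - a) * (ENNReal.ofReal (2*ε))⁻¹
              * μ (Set.Icc (-ε) ε ×ˢ B) := by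
  intro a b ha hab hb B hB
  have hvJ : volume.real (Icc (-ε) ε) = 2 * ε := by
    rw [Real.volume_real_Icc_of_le (by linarith)]; ring
  have hcompact : ∀ K : Set (Fin d → ℝ), IsCompact K →
      μ (Icc a b ×ˢ K) = ENNReal.ofReal (b - a) * (ENNReal.ofReal (2*ε))⁻¹
        * μ (Icc (-ε) ε ×ˢ K) := by
    intro K hK
    have key := real_measure_rectangle_of_isCompact isOpen_Ioo htest
      (isCompact_Icc (a := a) (b := b)) (Icc_subset_Ioo ha hb)
      (isCompact_Icc (a := -ε) (b := ε)) (Icc_subset_Ioo (by linarith) (by linarith))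
      (by rw [hvJ]; positivity) hK
    rw [hvJ, Real.volume_real_Icc_of_le hab] at key
    rw [← ofReal_measureReal (μ := μ) (s := Icc a b ×ˢ K),
      ← ofReal_measureReal (μ := μ) (s := Icc (-ε) ε ×ˢ K),
      ← ENNReal.ofReal_inv_of_pos (by positivity),
      ← ENNReal.ofReal_mul (by linarith), ← ENNReal.ofReal_mul (by
        have : 0 ≤ b - a := by linarith
        positivity)]
    congr 1
    field_simp
    linarith
  -- The slice measures `B ↦ μ (I × B)` are finite Borel measures on a Polish space.
  have hslice : ∀ (I : Set ℝ), MeasurableSet I → ∀ {S : Set (Fin d → ℝ)}, MeasurableSet S →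
      (μ.restrict (I ×ˢ univ)).map Prod.snd S = μ (I ×ˢ S) := by
    intro I hI S hS
    rw [Measure.map_apply measurable_snd hS, Measure.restrict_apply (measurable_snd hS)]
    congr 1
    ext p
    simp [and_comm]
  rw [← hslice _ measurableSet_Icc hB, ← hslice _ measurableSet_Icc hB,
    hB.measure_eq_iSup_isCompact, hB.measure_eq_iSup_isCompact]
  simp only [ENNReal.mul_iSup]
  refine iSup_congr fun K => iSup_congr fun _ => iSup_congr fun hK => ?_
  rw [hslice _ measurableSet_Icc hK.measurableSet, hslice _ measurableSet_Icc hK.measurableSet,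
    hcompact K hK]
end

section
/- Let N be a topological space equipped with its Borel σ-algebra, let φ : ℝ × N → N be a continuous flow (φ(0,x) = x and φ(t, φ(s,x)) = φ(t+s, x) for all t,s ∈ ℝ, x ∈ N), and let μ be a finite Borel measure on N invariant under the flow, i.e. the pushforward of μ under φ(t,·) equals μ for every t ∈ ℝ. Let Σ be a measurable space, ε > 0, j : Σ → N a measurable map, and define ι : ℝ × Σ → N by ι(t,q) = φ(t, j(q)). Assume that the restriction of ι to (−2ε, 2ε) × Σ is a measurable embedding (injective, measurable, and mapping measurable sets to Borel-measurable sets). Then for every measurable set B ⊆ Σ and every t with 0 < t ≤ ε, μ( ⋃_{s ∈ [−t, t)} φ(s, j(B)) ) = 2t · μ_Σ(B), where μ_Σ(B) := (2ε)^{−1} μ(ι([−ε,ε) × B)). In particular, the quantity (2t)^{−1} μ( ⋃_{s ∈ [−t,t)} φ(s, j(B)) ) is independent of t ∈ (0, ε]. -/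
open MeasureTheory Set

/-!
By invariance of `μ`, the tube `ι '' ([a, b) × B)` has the same measure as `ι '' ([0, b - a) × B)`,
so everything is governed by `F l = μ (ι '' ([0, l) × B))` for `l ∈ [0, 2ε]`. Injectivity of `ι` on
the flow box together with invariance makes `F` additive on `[0, 2ε]`, and `F` is bounded because
`μ` is finite. A bounded additive function on an interval is linear
(`eq_linear_of_bounded_additive`), hence `F (2t) = (2t / 2ε) F (2ε)`.
-/

/-- A bounded solution of Cauchy's equation on `[0, L]` is linear. The defect
`g s = f s - (s / L) f L` is additive with `g L = 0`, so doubling `s` (or `L - s`, when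
`s > L / 2`) shows that any bound for `|g|` can be halved. -/
lemma eq_linear_of_bounded_additive (f : ℝ → ℝ) (L C : ℝ) (hL : 0 < L)
    (hadd : ∀ a b, 0 ≤ a → 0 ≤ b → a + b ≤ L → f (a + b) = f a + f b)
    (hbd : ∀ s, 0 ≤ s → s ≤ L → |f s| ≤ C) (s : ℝ) (hs0 : 0 ≤ s) (hsL : s ≤ L) :
    f s = s / L * f L := by
  set g : ℝ → ℝ := fun s => f s - s / L * f L with hg
  have gadd : ∀ a b, 0 ≤ a → 0 ≤ b → a + b ≤ L → g (a + b) = g a + g b := by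
    intro a b ha hb hab
    simp only [hg, hadd a b ha hb hab]
    ring
  have gL : g L = 0 := by simp [hg, hL.ne']
  have key : ∀ n : ℕ, ∀ s, 0 ≤ s → s ≤ L → |g s| ≤ 2 * C * (1 / 2) ^ n := by
    intro n
    induction n with
    | zero =>
      intro s h0 h1
      have hfL := hbd L hL.le le_rfl
      have h2 : |s / L * f L| ≤ 1 * C := by
        rw [abs_mul, abs_of_nonneg (by positivity : 0 ≤ s / L)]
        exact mul_le_mul ((div_le_one hL).2 h1) hfL (abs_nonneg _) zero_le_one
      have h3 := abs_sub (f s) (s / L * f L)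
      have h4 := hbd s h0 h1
      simp only [hg, pow_zero]
      linarith
    | succ n ih =>
      have half : ∀ s, 0 ≤ s → s + s ≤ L → |g s| ≤ 2 * C * (1 / 2) ^ (n + 1) := by
        intro s h0 h1
        have h2 := ih (s + s) (by linarith) h1
        rw [gadd s s h0 h0 h1, ← two_mul, abs_mul, abs_two] at h2
        rw [pow_succ]
        linarith
      intro s h0 h1
      rcases le_total (s + s) L with h | h
      · exact half s h0 h
      · have h2 := gadd s (L - s) h0 (by linarith) (by linarith)
        rw [add_sub_cancel, gL] at h2
        have h3 : g s = -g (L - s) := by linarith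
        rw [h3, abs_neg]
        exact half _ (by linarith) (by linarith)
  have hlim : Filter.Tendsto (fun n : ℕ => 2 * C * (1 / 2 : ℝ) ^ n) Filter.atTop (nhds 0) := by
    simpa using (tendsto_pow_atTop_nhds_zero_of_lt_one (r := (1 / 2 : ℝ)) (by norm_num)
      (by norm_num)).const_mul (2 * C)
  have h0 : |g s| ≤ 0 := ge_of_tendsto' hlim fun n => key n s hs0 hsL
  have h1 : g s = 0 := abs_eq_zero.1 (le_antisymm h0 (abs_nonneg _))
  simp only [hg] at h1
  linarith

/-- Remark 2.4 (flow-box picture): the transversal measure of a set `B` equals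
`(2t)⁻¹` times the `μ`-measure of the union of the flow translates of `B` for times in
`[-t,t)`, independently of `t ∈ (0, ε]`. -/
theorem transversal_measure_eq_flow_tube
    {N : Type*} [TopologicalSpace N] [MeasurableSpace N] [BorelSpace N]
    (φ : ℝ × N → N) (hφcont : Continuous φ)
    (hφ0 : ∀ x, φ (0, x) = x)
    (hφadd : ∀ t s x, φ (t, φ (s, x)) = φ (t + s, x))
    (μ : Measure N) [IsFiniteMeasure μ]
    (hinv : ∀ t : ℝ, Measure.map (fun x => φ (t, x)) μ = μ)
    {Z : Type*} [MeasurableSpace Z] (ε : ℝ) (hε : 0 < ε)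
    (j : Z → N) (hj : Measurable j)
    (ι : ℝ × Z → N) (hι : ∀ t q, ι (t, q) = φ (t, j q))
    (hinj : Set.InjOn ι (Set.Ioo (-(2*ε)) (2*ε) ×ˢ (Set.univ : Set Z)))
    (hmeas : Measurable ι)
    (himage : ∀ A : Set (ℝ × Z), A ⊆ Set.Ioo (-(2*ε)) (2*ε) ×ˢ Set.univ →
      MeasurableSet A → MeasurableSet (ι '' A)) :
    ∀ B : Set Z, MeasurableSet B → ∀ t : ℝ, 0 < t → t ≤ ε →
      μ (⋃ s ∈ Set.Ico (-t) t, (fun q => φ (s, j q)) '' B)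
        = ENNReal.ofReal (2*t)
            * ((ENNReal.ofReal (2*ε))⁻¹ * μ (ι '' (Set.Ico (-ε) ε ×ˢ B))) := by
  intro B hB t ht htε
  have hmeasI : ∀ a b, -(2*ε) < a → b ≤ 2*ε → MeasurableSet (ι '' (Ico a b ×ˢ B)) := by
    intro a b ha hb
    refine himage _ ?_ (measurableSet_Ico.prod hB)
    exact prod_mono (fun x hx => ⟨ha.trans_le hx.1, hx.2.trans_le hb⟩) (subset_univ _)
  -- `ι '' ([c, b + c) × B)` is the preimage of `ι '' ([0, b) × B)` under the flow at time `-c`.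
  have htrans : ∀ b c, b ≤ 2*ε →
      μ (ι '' (Ico c (b + c) ×ˢ B)) = μ (ι '' (Ico 0 b ×ˢ B)) := by
    intro b c hb
    have hφm : Measurable (fun x => φ (-c, x)) :=
      (hφcont.comp (Continuous.prodMk continuous_const continuous_id)).measurable
    conv_rhs => rw [← hinv (-c)]
    rw [Measure.map_apply hφm (hmeasI 0 b (by linarith) hb)]
    congr 1
    ext x
    constructor
    · rintro ⟨⟨s, q⟩, ⟨⟨h1, h2⟩, hq⟩, rfl⟩
      simp only at h1 h2 hq
      refine ⟨(s - c, q), ⟨⟨by simp only; linarith, by simp only; linarith⟩, hq⟩, ?_⟩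
      simp only [hι, hφadd]
      congr 2
      ring
    · rintro ⟨⟨s, q⟩, ⟨⟨h1, h2⟩, hq⟩, h⟩
      simp only at h1 h2 hq h
      refine ⟨(s + c, q), ⟨⟨by simp only; linarith, by simp only; linarith⟩, hq⟩, ?_⟩
      have h3 := congrArg (fun y => φ (c, y)) h
      simp only [hι, hφadd, add_neg_cancel, hφ0] at h3
      rw [hι, add_comm, h3]
  have hlin := eq_linear_of_bounded_additive (fun l => μ.real (ι '' (Ico 0 l ×ˢ B))) (2*ε)
    (μ.real univ) (by linarith) (by
      intro a b ha hb hab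
      have hsplit : Ico 0 (a + b) ×ˢ B = Ico 0 a ×ˢ B ∪ Ico a (b + a) ×ˢ B := by
        rw [← union_prod, Ico_union_Ico_eq_Ico ha (by linarith), add_comm b a]
      have hdisj : Disjoint (ι '' (Ico 0 a ×ˢ B)) (ι '' (Ico a (b + a) ×ˢ B)) := by
        rw [Set.disjoint_left]
        rintro _ ⟨⟨s, q⟩, ⟨⟨h1, h2⟩, -⟩, rfl⟩ ⟨⟨s', q'⟩, ⟨⟨h1', h2'⟩, -⟩, h⟩
        simp only at h1 h2 h1' h2'
        have h3 := hinj ⟨⟨by simp only; linarith, by simp only; linarith⟩, mem_univ _⟩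
          ⟨⟨by simp only; linarith, by simp only; linarith⟩, mem_univ _⟩ h
        have h4 : s' = s := congrArg Prod.fst h3
        linarith
      rw [hsplit, image_union,
        measureReal_union hdisj (hmeasI _ _ (by linarith) (by linarith))]
      congr 1
      exact congrArg ENNReal.toReal (htrans b a (by linarith)))
    (by
      intro s _ _
      simp only [abs_of_nonneg measureReal_nonneg]
      exact measureReal_mono (subset_univ _))
    (2*t) (by linarith) (by linarith)
  have htube : (⋃ s ∈ Ico (-t) t, (fun q => φ (s, j q)) '' B) = ι '' (Ico (-t) t ×ˢ B) := by
    ext x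
    simp only [mem_iUnion, mem_image, Prod.exists, mem_prod, hι]
    constructor
    · rintro ⟨s, hs, q, hq, rfl⟩
      exact ⟨s, q, ⟨hs, hq⟩, rfl⟩
    · rintro ⟨s, q, ⟨hs, hq⟩, rfl⟩
      exact ⟨s, hs, q, hq, rfl⟩
  have h1 := htrans (2*t) (-t) (by linarith)
  have h2 := htrans (2*ε) (-ε) le_rfl
  rw [show 2*t + -t = t by ring] at h1
  rw [show 2*ε + -ε = ε by ring] at h2
  rw [htube, h1, h2, ← ofReal_measureReal (μ := μ) (s := ι '' (Ico 0 (2*t) ×ˢ B)),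
    ← ofReal_measureReal (μ := μ) (s := ι '' (Ico 0 (2*ε) ×ˢ B)), hlin,
    ENNReal.ofReal_mul (by positivity), ENNReal.ofReal_div_of_pos (by linarith),
    div_eq_mul_inv, mul_assoc]
end

section
/- Let m ≥ 1, δ > 0, R > 0, and 0 < ε' < 1. Let b : ℝ^m → ℂ be smooth and compactly supported with support contained in {ξ : |ξ| ≥ δ}, and for each h ∈ (0,1] let g_h : ℝ^m → ℂ be a smooth function supported in the closed ball of radius R centered at 0 such that for every n ∈ ℕ there is a constant C_n (independent of h) with sup_{y ∈ ℝ^m} ‖D^n g_h(y)‖ ≤ C_n h^{−n(1−ε')} for all h ∈ (0,1], where D^n denotes the n-th total (Fréchet) derivative. Then for every N ∈ ℕ there exists C > 0 such that for all h ∈ (0,1] and all x ∈ ℝ^m, | ∫_{ℝ^m} ∫_{ℝ^m} e^{(i/h)⟨x−y, ξ⟩} b(ξ) g_h(y) dy dξ | ≤ C h^N. -/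
/-!
After factoring out the unimodular phase `e^{i⟨x,ξ⟩/h}`, the inner integral in `y` is
`b(ξ) 𝓕(g_h)(ξ / (2πh))`. Integrating by parts `n` times gives
`‖w‖^n ‖𝓕 f w‖ ≲ max_{p ≤ n} sup ‖D^p f‖` for `f` supported in a fixed ball
(`pow_mul_norm_fourier_le_of_support`). On the support of `b` the frequency `w = ξ / (2πh)` has norm
at least `δ / (2πh)`, so each integration by parts gains `h` and loses only `h^{-(1-ε')}`; the inner
integral is thus `O(‖b(ξ)‖ h^{nε'})`, uniformly in `x`. Taking `nε' ≥ N` and integrating the bound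
over `ξ` gives the claim.
-/

open MeasureTheory Set
open scoped RealInnerProductSpace
open scoped FourierTransform in
/-- Quantitative Fourier decay: `n` integrations by parts for a function supported in a ball whose
derivatives of order at most `n` are bounded by `A`. -/
lemma pow_mul_norm_fourier_le_of_support {m : ℕ} {R A : ℝ} {n : ℕ}
    {f : EuclideanSpace ℝ (Fin m) → ℂ} (hf : ContDiff ℝ (⊤ : ℕ∞) f)
    (hs : Function.support f ⊆ Metric.closedBall 0 R)
    (hA : ∀ p ≤ n, ∀ y, ‖iteratedFDeriv ℝ p f y‖ ≤ A) (w : EuclideanSpace ℝ (Fin m)) :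
    ‖w‖ ^ n * ‖𝓕 f w‖ ≤ 2 ^ n * ((n + 1) *
      (A * volume.real (Metric.closedBall (0 : EuclideanSpace ℝ (Fin m)) R))) := by
  have hts : tsupport f ⊆ Metric.closedBall 0 R := closure_minimal hs Metric.isClosed_closedBall
  have hc : HasCompactSupport f :=
    HasCompactSupport.of_support_subset_isCompact (isCompact_closedBall 0 R) hs
  have hcont (p : ℕ) : Continuous (iteratedFDeriv ℝ p f) :=
    hf.continuous_iteratedFDeriv (by exact_mod_cast le_top)
  have hint (k p : ℕ) : Integrable (fun v ↦ ‖v‖ ^ k * ‖iteratedFDeriv ℝ p f v‖) := by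
    refine Continuous.integrable_of_hasCompactSupport ?_ ?_
    · exact (continuous_norm.pow k).mul (hcont p).norm
    · exact ((hc.iteratedFDeriv p).norm).mul_left
  have key := Real.pow_mul_norm_iteratedFDeriv_fourier_le (K := ⊤) (N := ⊤) hf
    (fun k p _ _ ↦ hint k p) (k := 0) (n := n) le_top le_top w
  have hbound : ∀ p ≤ n, ∫ v, ‖iteratedFDeriv ℝ p f v‖ ≤
      A * volume.real (Metric.closedBall (0 : EuclideanSpace ℝ (Fin m)) R) := by
    intro p hp
    have hsub : Function.support (fun v ↦ ‖iteratedFDeriv ℝ p f v‖) ⊆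
        Metric.closedBall 0 R := by
      exact fun v hv ↦ hts (support_iteratedFDeriv_subset p (norm_ne_zero_iff.1 hv))
    rw [← setIntegral_eq_integral_of_forall_compl_eq_zero
      (fun v hv ↦ by_contra fun h ↦ hv (hsub h))]
    refine (Real.le_norm_self _).trans (norm_setIntegral_le_of_norm_le_const
      measure_closedBall_lt_top (fun v _ ↦ ?_))
    simpa using hA p hp v
  simp only [norm_iteratedFDeriv_zero, pow_zero, one_mul, zero_add, Nat.cast_zero, mul_zero,
    Finset.range_one, Finset.singleton_product, Finset.sum_map, Function.Embedding.coeFn_mk] at key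
  refine key.trans ?_
  gcongr
  refine (Finset.sum_le_card_nsmul _ _ _ fun p hp ↦
    hbound p (Nat.lt_succ_iff.1 (Finset.mem_range.1 hp))).trans ?_
  simp

open scoped FourierTransform in
lemma inner_integral_eq_fourier {m : ℕ} (f : EuclideanSpace ℝ (Fin m) → ℂ) (c : ℂ) {h : ℝ}
    (x ξ : EuclideanSpace ℝ (Fin m)) :
    ∫ y : EuclideanSpace ℝ (Fin m),
      Complex.exp (Complex.I * Complex.ofReal (⟪x - y, ξ⟫ / h)) * (c * f y) =
    Complex.exp (Complex.ofReal (⟪x, ξ⟫ / h) * Complex.I) * c * 𝓕 f ((2 * Real.pi * h)⁻¹ • ξ) := by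
  rw [Real.fourier_eq', ← integral_const_mul]
  congr 1
  ext y
  have hpi : Real.pi ≠ 0 := Real.pi_ne_zero
  have e : -2 * Real.pi * ⟪y, (2 * Real.pi * h)⁻¹ • ξ⟫ = -(⟪y, ξ⟫ / h) := by
    rw [real_inner_smul_right]
    field_simp
  rw [e, inner_sub_left, sub_div, smul_eq_mul, sub_eq_add_neg, Complex.ofReal_add, mul_add,
    Complex.exp_add, mul_comm Complex.I, mul_comm Complex.I]
  ring

/-- Oscillatory integral estimate (e:awayEst) in the proof of Lemma 4.1: with a frequency
cutoff `b` supported in `{|ξ| ≥ δ}` and an `h`-dependent rough amplitude `g_h` whose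
`n`-th derivatives grow at most like `h^{-n(1-ε')}`, the oscillatory integral
`∫∫ e^{(i/h)⟨x-y,ξ⟩} b(ξ) g_h(y) dy dξ` is `O(h^∞)` uniformly in `x`. -/
theorem nonstationary_phase_rough_amplitude
    (m : ℕ) (hm : 1 ≤ m) (δ R ε' : ℝ) (hδ : 0 < δ) (hR : 0 < R)
    (hε'0 : 0 < ε') (hε'1 : ε' < 1)
    (b : EuclideanSpace ℝ (Fin m) → ℂ) (hb : ContDiff ℝ (⊤ : ℕ∞) b) (hbc : HasCompactSupport b)
    (hbsupp : Function.support b ⊆ {ξ | δ ≤ ‖ξ‖})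
    (g : ℝ → EuclideanSpace ℝ (Fin m) → ℂ)
    (hg : ∀ h ∈ Set.Ioc (0:ℝ) 1, ContDiff ℝ (⊤ : ℕ∞) (g h))
    (hgsupp : ∀ h ∈ Set.Ioc (0:ℝ) 1, Function.support (g h) ⊆ Metric.closedBall 0 R)
    (hgder : ∀ n : ℕ, ∃ C : ℝ, ∀ h ∈ Set.Ioc (0:ℝ) 1, ∀ y,
      ‖iteratedFDeriv ℝ n (g h) y‖ ≤ C * h ^ (-((n : ℝ) * (1 - ε')))) :
    ∀ N : ℕ, ∃ C > 0, ∀ h ∈ Set.Ioc (0:ℝ) 1, ∀ x : EuclideanSpace ℝ (Fin m),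
      ‖∫ ξ : EuclideanSpace ℝ (Fin m), ∫ y : EuclideanSpace ℝ (Fin m),
          Complex.exp (Complex.I * Complex.ofReal (⟪x - y, ξ⟫ / h)) * (b ξ * g h y)‖
        ≤ C * h ^ N := by
  intro N
  obtain ⟨n, hn⟩ := exists_nat_ge (N / ε')
  have hnN : (N : ℝ) ≤ n * ε' := (div_le_iff₀ hε'0).1 hn
  choose C hC using hgder
  set V : ℝ := volume.real (Metric.closedBall (0 : EuclideanSpace ℝ (Fin m)) R)
  have hV : 0 ≤ V := measureReal_nonneg
  set S : ℝ := ∑ p ∈ Finset.range (n + 1), |C p|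
  have hS : 0 ≤ S := Finset.sum_nonneg fun _ _ ↦ abs_nonneg _
  set K : ℝ := (2 * Real.pi / δ) ^ n * (2 ^ n * ((n + 1) * (S * V)))
  have hK : 0 ≤ K := by positivity
  have hbint : Integrable b := hb.continuous.integrable_of_hasCompactSupport hbc
  refine ⟨K * (∫ ξ, ‖b ξ‖) + 1, by positivity, fun h hh x ↦ ?_⟩
  have h0 : 0 < h := hh.1
  -- The worst derivative bound among the orders `p ≤ n` is the one at `p = n`, as `h ≤ 1`.
  have hA : ∀ p ≤ n, ∀ y, ‖iteratedFDeriv ℝ p (g h) y‖ ≤ S * h ^ (-((n : ℝ) * (1 - ε'))) := by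
    intro p hp y
    have h1 : C p ≤ S := (le_abs_self _).trans
      (Finset.single_le_sum (f := fun p ↦ |C p|) (fun _ _ ↦ abs_nonneg _)
        (Finset.mem_range.2 (Nat.lt_succ_of_le hp)))
    have h2 : h ^ (-((p : ℝ) * (1 - ε'))) ≤ h ^ (-((n : ℝ) * (1 - ε'))) := by
      refine Real.rpow_le_rpow_of_exponent_ge h0 hh.2 (neg_le_neg ?_)
      exact mul_le_mul_of_nonneg_right (by exact_mod_cast hp) (by linarith)
    exact (hC p h hh y).trans (mul_le_mul h1 h2 (by positivity) hS)
  have hpow : h ^ n * h ^ (-((n : ℝ) * (1 - ε'))) ≤ h ^ N := by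
    rw [← Real.rpow_natCast h n, ← Real.rpow_add h0, ← Real.rpow_natCast h N]
    exact Real.rpow_le_rpow_of_exponent_ge h0 hh.2 (by linarith)
  have hpt : ∀ ξ, ‖∫ y : EuclideanSpace ℝ (Fin m),
      Complex.exp (Complex.I * Complex.ofReal (⟪x - y, ξ⟫ / h)) * (b ξ * g h y)‖ ≤
      ‖b ξ‖ * (K * h ^ N) := by
    intro ξ
    rw [inner_integral_eq_fourier, norm_mul, norm_mul, Complex.norm_exp_ofReal_mul_I, one_mul]
    by_cases hbξ : b ξ = 0
    · simp [hbξ]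
    have hξ : δ ≤ ‖ξ‖ := hbsupp hbξ
    refine mul_le_mul_of_nonneg_left ?_ (norm_nonneg _)
    have key := pow_mul_norm_fourier_le_of_support (hg h hh) (hgsupp h hh) hA
      ((2 * Real.pi * h)⁻¹ • ξ)
    set F := ‖FourierTransform.fourier (g h) ((2 * Real.pi * h)⁻¹ • ξ)‖
    have hw : δ / (2 * Real.pi * h) ≤ ‖(2 * Real.pi * h)⁻¹ • ξ‖ := by
      rw [norm_smul, Real.norm_of_nonneg (by positivity), div_eq_inv_mul]
      gcongr
    have h3 : (δ / (2 * Real.pi * h)) ^ n * F ≤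
        2 ^ n * ((n + 1) * (S * h ^ (-((n : ℝ) * (1 - ε'))) * V)) :=
      (by gcongr : _ ≤ ‖(2 * Real.pi * h)⁻¹ • ξ‖ ^ n * F).trans key
    calc F = (2 * Real.pi * h / δ) ^ n * ((δ / (2 * Real.pi * h)) ^ n * F) := by
            rw [← mul_assoc, ← mul_pow]
            have : 2 * Real.pi * h / δ * (δ / (2 * Real.pi * h)) = 1 := by
              have := Real.pi_pos
              field_simp
            rw [this, one_pow, one_mul]
      _ ≤ (2 * Real.pi * h / δ) ^ n *
          (2 ^ n * ((n + 1) * (S * h ^ (-((n : ℝ) * (1 - ε'))) * V))) := by gcongr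
      _ = K * (h ^ n * h ^ (-((n : ℝ) * (1 - ε')))) := by
            rw [mul_div_right_comm, mul_pow]
            ring
      _ ≤ K * h ^ N := by gcongr
  calc _ ≤ ∫ ξ, ‖b ξ‖ * (K * h ^ N) :=
        norm_integral_le_of_norm_le (hbint.norm.mul_const _) (.of_forall hpt)
    _ = K * (∫ ξ, ‖b ξ‖) * h ^ N := by rw [integral_mul_const]; ring
    _ ≤ (K * (∫ ξ, ‖b ξ‖) + 1) * h ^ N := by gcongr; linarith
end

section
/- Let m ≥ 1 and let β : ℝ^m → ℂ be smooth and compactly supported with β ≡ 1 on some neighborhood of 0. For h > 0 and u ∈ L¹(ℝ^m), define (T_h^β u)(x) := (2πh)^{−m} ∫_{ℝ^m} β(ξ) ( ∫_{ℝ^m} e^{(i/h)⟨x−y, ξ⟩} u(y) dy ) dξ. Let A ⊆ ℝ^m be a bounded measurable set and suppose there is C₀ > 0 such that the Lebesgue measure of {x ∈ ℝ^m : dist(x, ∂A) ≤ r} is at most C₀ r for all r ∈ (0,1], where ∂A is the topological boundary of A. Then there exists C > 0 such that for all h ∈ (0,1], ‖ 1_A − T_h^β (1_A) ‖_{L²(ℝ^m)}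 ≤ C h^{1/2}. -/
/-!
Let `G = 𝓕⁻ β`, a Schwartz function with `∫ G = β 0 = 1`. By Fubini and the substitution
`y = x - 2πh w`, `T_h u (x) = ∫ G(w) u(x - 2πh w) dw` (`multiplier_eq_integral`), hence
`F := 1_A - T_h 1_A` is given by `F(x) = ∫ G(w) (1_A(x) - 1_A(x - 2πh w)) dw`.

Two bounds follow. Pointwise, `|F| ≤ M := ∫ |G|`. In `L¹`, Tonelli reduces matters to the modulus
of continuity `∫ |1_A(x) - 1_A(x - v)| dx ≤ K |v|` (`lintegral_indicator_sub_translate_le`), which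
holds because `x` and `x - v` can lie on different sides of `A` only if `x` is within `|v|` of the
frontier; so `∫ |F| ≤ 2πh K ∫ |w| |G(w)| dw`. Therefore `∫ |F|² ≤ M ∫ |F| = O(h)`.
-/

open MeasureTheory Set
open scoped RealInnerProductSpace
open scoped FourierTransform SchwartzMap ENNReal

/-- A segment joining a point of `A` to a point outside `A` meets the frontier of `A`. -/
theorem infDist_frontier_le_dist {E : Type*} [NormedAddCommGroup E] [NormedSpace ℝ E]
    {A : Set E} {x y : E} (hxy : ¬ (x ∈ A ↔ y ∈ A)) :
    Metric.infDist x (frontier A) ≤ dist x y := by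
  have key : ∃ z ∈ segment ℝ x y, z ∈ frontier A := by
    by_contra! hcon
    have hsub : segment ℝ x y ⊆ interior A ∪ interior Aᶜ := by
      intro z hz
      have := hcon z hz
      rw [interior_compl]
      by_contra h
      simp only [mem_union, mem_compl_iff, not_or, not_not] at h
      exact this ⟨h.2, h.1⟩
    have hd : Disjoint (interior A) (interior Aᶜ) :=
      (disjoint_compl_right (a := A)).mono interior_subset interior_subset
    have hp : IsPreconnected (segment ℝ x y) := (convex_segment x y).isPreconnected
    have hx := left_mem_segment ℝ x y
    have hy := right_mem_segment ℝ x y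
    rcases hsub hx with h | h
    · have h2 := hp.subset_left_of_subset_union isOpen_interior isOpen_interior hd hsub ⟨x, hx, h⟩ hy
      exact hxy ⟨fun _ => interior_subset h2, fun _ => interior_subset h⟩
    · have h2 := hp.subset_right_of_subset_union isOpen_interior isOpen_interior hd hsub
        ⟨x, hx, h⟩ hy
      have hx' : x ∉ A := interior_subset h
      have hy' : y ∉ A := interior_subset h2
      exact hxy ⟨fun h => absurd h hx', fun h => absurd h hy'⟩
  obtain ⟨z, hz, hzA⟩ := key
  refine (Metric.infDist_le_dist_of_mem hzA).trans ?_
  have := dist_add_dist_of_mem_segment hz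
  linarith [dist_nonneg (x := z) (y := y)]

/-- The `L¹` modulus of continuity of the indicator of `A` is at most linear. For `‖v‖ ≤ 1` the
integrand vanishes off the `‖v‖`-neighbourhood of the frontier; for `‖v‖ > 1` the trivial bound
`2 |A|` is already at most `2 |A| ‖v‖`. -/
theorem lintegral_indicator_sub_translate_le {m : ℕ}
    {A : Set (EuclideanSpace ℝ (Fin m))} (hAbd : Bornology.IsBounded A)
    (hAmeas : MeasurableSet A) {C₀ : ℝ} (hC₀ : 0 < C₀)
    (hbdry : ∀ r ∈ Set.Ioc (0:ℝ) 1,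
      volume {x : EuclideanSpace ℝ (Fin m) | Metric.infDist x (frontier A) ≤ r}
        ≤ ENNReal.ofReal (C₀ * r)) (v : EuclideanSpace ℝ (Fin m)) :
    ∫⁻ x, ‖A.indicator (fun _ => (1:ℂ)) x - A.indicator (fun _ => (1:ℂ)) (x - v)‖ₑ
      ≤ ENNReal.ofReal ((C₀ + 2 * volume.real A) * ‖v‖) := by
  have hAfin : volume A ≠ ∞ := hAbd.measure_lt_top.ne
  rcases le_or_gt ‖v‖ 1 with hv1 | hv1
  · rcases eq_or_ne v 0 with rfl | hv0
    · simp
    have hvpos : 0 < ‖v‖ := norm_pos_iff.mpr hv0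
    have hms : MeasurableSet
        {x : EuclideanSpace ℝ (Fin m) | Metric.infDist x (frontier A) ≤ ‖v‖} :=
      measurableSet_le (Metric.continuous_infDist_pt _).measurable measurable_const
    calc ∫⁻ x, ‖A.indicator (fun _ => (1:ℂ)) x - A.indicator (fun _ => (1:ℂ)) (x - v)‖ₑ
        ≤ ∫⁻ x, {x | Metric.infDist x (frontier A) ≤ ‖v‖}.indicator 1 x := by
          refine lintegral_mono fun x => ?_
          by_cases hx : x ∈ A ↔ x - v ∈ A
          · by_cases h : x ∈ A <;> simp [h, ← hx]
          · have h1 : Metric.infDist x (frontier A) ≤ ‖v‖ := by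
              simpa [dist_eq_norm] using infDist_frontier_le_dist hx
            have h2 : x ∈ {x | Metric.infDist x (frontier A) ≤ ‖v‖} := h1
            rw [indicator_of_mem h2]
            by_cases h : x ∈ A <;> by_cases h' : x - v ∈ A <;> simp [h, h']
      _ = volume {x | Metric.infDist x (frontier A) ≤ ‖v‖} := lintegral_indicator_one hms
      _ ≤ ENNReal.ofReal (C₀ * ‖v‖) := hbdry _ ⟨hvpos, hv1⟩
      _ ≤ _ := by gcongr; linarith [measureReal_nonneg (μ := volume) (s := A)]
  · have hmeas : Measurable (A.indicator (fun _ => (1:ℂ))) := measurable_const.indicator hAmeas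
    have hI : ∫⁻ x, ‖A.indicator (fun _ => (1:ℂ)) x‖ₑ = volume A := by
      rw [← lintegral_indicator_one hAmeas]
      congr 1 with x
      by_cases h : x ∈ A <;> simp [h]
    calc ∫⁻ x, ‖A.indicator (fun _ => (1:ℂ)) x - A.indicator (fun _ => (1:ℂ)) (x - v)‖ₑ
        ≤ ∫⁻ x, (‖A.indicator (fun _ => (1:ℂ)) x‖ₑ + ‖A.indicator (fun _ => (1:ℂ)) (x - v)‖ₑ) :=
          lintegral_mono fun x => enorm_sub_le
      _ = volume A + volume A := by
          rw [lintegral_add_left hmeas.enorm,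
            lintegral_sub_right_eq_self (fun x => ‖A.indicator (fun _ => (1:ℂ)) x‖ₑ) v, hI]
      _ = ENNReal.ofReal (2 * volume.real A) := by
          rw [two_mul, ENNReal.ofReal_add measureReal_nonneg measureReal_nonneg,
            ofReal_measureReal hAfin]
      _ ≤ _ := by
          refine ENNReal.ofReal_le_ofReal ?_
          nlinarith [measureReal_nonneg (μ := volume) (s := A)]

/-- The multiplier is an average of translates against the kernel `𝓕⁻ β`. Mathlib's Fourier
transform has phase `2π⟪ξ, w⟫`, so the rescaling is `y = x - (2πh) w`, whose Jacobian cancels the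
factor `(2πh)^{-m}`. -/
theorem multiplier_eq_integral {m : ℕ}
    (β : 𝓢(EuclideanSpace ℝ (Fin m), ℂ)) {u : EuclideanSpace ℝ (Fin m) → ℂ}
    (hu : Integrable u) {h : ℝ} (hh : 0 < h) (x : EuclideanSpace ℝ (Fin m)) :
    Complex.ofReal (((2 * Real.pi * h) ^ m)⁻¹) *
          ∫ ξ : EuclideanSpace ℝ (Fin m), β ξ *
            ∫ y : EuclideanSpace ℝ (Fin m),
              Complex.exp (Complex.I * Complex.ofReal (⟪x - y, ξ⟫ / h)) * u y
      = ∫ w, (𝓕⁻ β) w * u (x - (2 * Real.pi * h) • w) := by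
  set c : ℝ := 2 * Real.pi * h with hc
  have hcpos : 0 < c := by positivity
  have hinner : ∀ ξ : EuclideanSpace ℝ (Fin m),
      (∫ y : EuclideanSpace ℝ (Fin m),
          Complex.exp (Complex.I * Complex.ofReal (⟪x - y, ξ⟫ / h)) * u y)
        = (c ^ m : ℝ) * ∫ w, Complex.exp ((2 * Real.pi * ⟪ξ, w⟫ : ℝ) * Complex.I)
            * u (x - c • w) := by
    intro ξ
    have h1 := integral_sub_left_eq_self (μ := volume)
      (fun y => Complex.exp (Complex.I * Complex.ofReal (⟪x - y, ξ⟫ / h)) * u y) x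
    have h2 := Measure.integral_comp_smul volume
      (fun y => Complex.exp (Complex.I * Complex.ofReal (⟪x - (x - y), ξ⟫ / h)) * u (x - y)) c
    rw [h1] at h2
    have h3 : ∀ w : EuclideanSpace ℝ (Fin m),
        Complex.exp (Complex.I * Complex.ofReal (⟪x - (x - c • w), ξ⟫ / h)) * u (x - c • w)
        = Complex.exp ((2 * Real.pi * ⟪ξ, w⟫ : ℝ) * Complex.I) * u (x - c • w) := by
      intro w
      rw [sub_sub_cancel, inner_smul_left, real_inner_comm, mul_comm Complex.I]
      congr 4
      simp only [hc, conj_trivial]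
      field_simp
    simp_rw [h3] at h2
    rw [h2, finrank_euclideanSpace_fin, abs_of_pos (by positivity), Complex.real_smul, ← mul_assoc,
      ← Complex.ofReal_mul, mul_inv_cancel₀ (by positivity), Complex.ofReal_one, one_mul]
  have hv : Integrable (fun w => u (x - c • w)) :=
    (hu.comp_sub_left x).comp_smul hcpos.ne'
  have hprod : Integrable (Function.uncurry fun ξ w : EuclideanSpace ℝ (Fin m) =>
      β ξ * (Complex.exp ((2 * Real.pi * ⟪ξ, w⟫ : ℝ) * Complex.I) * u (x - c • w)))
      (volume.prod volume) := by
    have h0 := (β.integrable (μ := volume)).mul_prod hv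
    have h1 := h0.bdd_mul (c := 1)
      (f := fun p : EuclideanSpace ℝ (Fin m) × EuclideanSpace ℝ (Fin m) =>
        Complex.exp ((2 * Real.pi * ⟪p.1, p.2⟫ : ℝ) * Complex.I))
      (by apply Continuous.aestronglyMeasurable; fun_prop)
      (Filter.Eventually.of_forall fun p => (Complex.norm_exp_ofReal_mul_I _).le)
    refine h1.congr (Filter.Eventually.of_forall fun p => ?_)
    simp only [Function.uncurry]
    ring
  simp_rw [hinner]
  have h4 : ∀ ξ : EuclideanSpace ℝ (Fin m),
     β ξ * ((c ^ m : ℝ) * ∫ w, Complex.exp ((2 * Real.pi * ⟪ξ, w⟫ : ℝ) * Complex.I)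
            * u (x - c • w)) = (c ^ m : ℝ) * ∫ w, β ξ *
            (Complex.exp ((2 * Real.pi * ⟪ξ, w⟫ : ℝ) * Complex.I) * u (x - c • w)) := by
    intro ξ
    rw [integral_const_mul]; ring
  simp_rw [h4]
  rw [integral_const_mul, ← mul_assoc, ← Complex.ofReal_mul, inv_mul_cancel₀ (by positivity),
    Complex.ofReal_one, one_mul, integral_integral_swap hprod]
  congr 1 with w
  rw [SchwartzMap.fourierInv_coe, Real.fourierInv_eq', ← integral_mul_const]
  congr 1 with ξ
  simp only [smul_eq_mul]
  ring

theorem integral_fourierInv_eq {m : ℕ} (β : 𝓢(EuclideanSpace ℝ (Fin m), ℂ)) :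
    ∫ w, (𝓕⁻ β) w = β 0 := by
  have h : (𝓕 (𝓕⁻ β)) 0 = β 0 := by rw [FourierTransform.fourier_fourierInv_eq]
  rw [← h, SchwartzMap.fourier_coe, Real.fourier_eq']
  simp

/-- Lemma 4.1 (Euclidean-chart content): for a bounded measurable set `A` whose boundary
has a linear Minkowski-content bound, the indicator of `A` differs from its low-frequency
part `T_h^β 1_A` by `O(h^{1/2})` in `L²`. -/
theorem indicator_lowfreq_approx
    (m : ℕ) (hm : 1 ≤ m)
    (β : EuclideanSpace ℝ (Fin m) → ℂ) (hβ : ContDiff ℝ (⊤ : ℕ∞) β) (hβc : HasCompactSupport β)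
    (hβ1 : ∀ᶠ ξ in nhds (0 : EuclideanSpace ℝ (Fin m)), β ξ = 1)
    (T : ℝ → (EuclideanSpace ℝ (Fin m) → ℂ) → EuclideanSpace ℝ (Fin m) → ℂ)
    (hT : ∀ h u x, T h u x
      = Complex.ofReal (((2 * Real.pi * h) ^ m)⁻¹) *
          ∫ ξ : EuclideanSpace ℝ (Fin m), β ξ *
            ∫ y : EuclideanSpace ℝ (Fin m),
              Complex.exp (Complex.I * Complex.ofReal (⟪x - y, ξ⟫ / h)) * u y)
    (A : Set (EuclideanSpace ℝ (Fin m))) (hAbd : Bornology.IsBounded A)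
    (hAmeas : MeasurableSet A)
    (C₀ : ℝ) (hC₀ : 0 < C₀)
    (hbdry : ∀ r ∈ Set.Ioc (0:ℝ) 1,
      volume {x : EuclideanSpace ℝ (Fin m) | Metric.infDist x (frontier A) ≤ r}
        ≤ ENNReal.ofReal (C₀ * r)) :
    ∃ C > 0, ∀ h ∈ Set.Ioc (0:ℝ) 1,
      eLpNorm (fun x => A.indicator (fun _ => (1:ℂ)) x
          - T h (A.indicator (fun _ => (1:ℂ))) x) 2 volume
        ≤ ENNReal.ofReal (C * Real.sqrt h) := by
  set b : 𝓢(EuclideanSpace ℝ (Fin m), ℂ) := hβc.toSchwartzMap hβ with hb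
  have hbβ : ∀ ξ, β ξ = b ξ := fun ξ => rfl
  set G : 𝓢(EuclideanSpace ℝ (Fin m), ℂ) := 𝓕⁻ b with hG
  have hGint : ∫ w, G w = 1 := by
    rw [hG, integral_fourierInv_eq, ← hbβ, hβ1.self_of_nhds]
  set u : EuclideanSpace ℝ (Fin m) → ℂ := A.indicator (fun _ => (1:ℂ)) with hu_def
  have hu_meas : Measurable u := measurable_const.indicator hAmeas
  have hu_int : Integrable u :=
    (integrable_indicator_iff hAmeas).mpr (integrableOn_const hAbd.measure_lt_top.ne)
  set M : ℝ := ∫ w, ‖G w‖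
  set N : ℝ := ∫ w, ‖w‖ * ‖G w‖
  have hM0 : 0 ≤ M := integral_nonneg fun _ => norm_nonneg _
  have hN0 : 0 ≤ N := integral_nonneg fun _ => by positivity
  have hMl : ∫⁻ w, ‖G w‖ₑ = ENNReal.ofReal M :=
    (ofReal_integral_norm_eq_lintegral_enorm G.integrable).symm
  set K : ℝ := C₀ + 2 * volume.real A
  have hK0 : 0 < K := by positivity
  -- The `+ 1` only serves to make the constant strictly positive.
  refine ⟨Real.sqrt (M * (K * (2 * Real.pi) * N)) + 1, by positivity, fun h hh => ?_⟩
  have hh0 : 0 < h := hh.1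
  set c : ℝ := 2 * Real.pi * h with hc
  have hc0 : 0 < c := by positivity
  set F : EuclideanSpace ℝ (Fin m) → ℂ := fun x => u x - T h u x with hF
  have hu1 : ∀ x y, ‖u x - u y‖ₑ ≤ 1 := by
    intro x y
    simp only [hu_def]
    by_cases h : x ∈ A <;> by_cases h' : y ∈ A <;> simp [h, h']
  have hFle : ∀ x, ‖F x‖ₑ ≤ ∫⁻ w, ‖G w‖ₑ * ‖u x - u (x - c • w)‖ₑ := by
    intro x
    have hrep : T h u x = ∫ w, G w * u (x - c • w) := by
      rw [hT]
      exact multiplier_eq_integral b hu_int hh0 x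
    have hint : Integrable (fun w => G w * u (x - c • w)) := by
      refine G.integrable.mul_bdd (c := 1) ?_ (Filter.Eventually.of_forall fun w => ?_)
      · exact (hu_meas.comp (by fun_prop)).aestronglyMeasurable
      · exact (norm_indicator_le_norm_self _ _).trans (by simp)
    have hF' : F x = ∫ w, G w * (u x - u (x - c • w)) := by
      simp only [hF, hrep, mul_sub]
      rw [integral_sub (G.integrable.mul_const _) hint, integral_mul_const, hGint, one_mul]
    rw [hF']
    refine (enorm_integral_le_lintegral_enorm _).trans (le_of_eq ?_)
    simp_rw [enorm_mul]
  have hFM : ∀ x, ‖F x‖ₑ ≤ ENNReal.ofReal M := by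
    intro x
    rw [← hMl]
    refine (hFle x).trans (lintegral_mono fun w => ?_)
    exact mul_le_of_le_one_right' (hu1 _ _)
  have hN : ∫⁻ w, ‖G w‖ₑ * ENNReal.ofReal (K * ‖c • w‖) = ENNReal.ofReal (K * c * N) := by
    have : ∀ w, ‖G w‖ₑ * ENNReal.ofReal (K * ‖c • w‖)
        = ENNReal.ofReal (K * c * (‖w‖ * ‖G w‖)) := by
      intro w
      rw [← ofReal_norm, ← ENNReal.ofReal_mul (norm_nonneg _), norm_smul, Real.norm_of_nonneg hc0.le]
      congr 1; ring
    simp_rw [this]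
    rw [← ofReal_integral_eq_lintegral_ofReal, integral_const_mul]
    · simpa using (G.integrable_pow_mul volume 1).const_mul (K * c)
    · exact Filter.Eventually.of_forall fun w => by positivity
  have hFL1 : ∫⁻ x, ‖F x‖ₑ ≤ ENNReal.ofReal (K * c * N) := by
    calc ∫⁻ x, ‖F x‖ₑ ≤ ∫⁻ x, ∫⁻ w, ‖G w‖ₑ * ‖u x - u (x - c • w)‖ₑ := lintegral_mono hFle
      _ = ∫⁻ w, ∫⁻ x, ‖G w‖ₑ * ‖u x - u (x - c • w)‖ₑ := by
          refine lintegral_lintegral_swap (Measurable.aemeasurable ?_)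
          have hGm : Measurable G := G.continuous.measurable
          simp only [Function.uncurry_def]
          fun_prop
      _ = ∫⁻ w, ‖G w‖ₑ * ∫⁻ x, ‖u x - u (x - c • w)‖ₑ := by
          congr 1 with w
          rw [lintegral_const_mul]
          fun_prop
      _ ≤ ∫⁻ w, ‖G w‖ₑ * ENNReal.ofReal (K * ‖c • w‖) := by
          gcongr with w
          exact lintegral_indicator_sub_translate_le hAbd hAmeas hC₀ hbdry _
      _ = _ := hN
  -- The sup bound `M` turns the `L¹` estimate into an `L²` one: `‖F‖² ≤ M ‖F‖` pointwise.
  have hFL2 : ∫⁻ x, ‖F x‖ₑ ^ (2:ℝ) ≤ ENNReal.ofReal (M * (K * c * N)) := by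
    calc ∫⁻ x, ‖F x‖ₑ ^ (2:ℝ) ≤ ∫⁻ x, ENNReal.ofReal M * ‖F x‖ₑ := by
          refine lintegral_mono fun x => ?_
          simp only [ENNReal.rpow_two, sq]
          gcongr
          exact hFM x
      _ = ENNReal.ofReal M * ∫⁻ x, ‖F x‖ₑ := lintegral_const_mul' _ _ ENNReal.ofReal_ne_top
      _ ≤ ENNReal.ofReal M * ENNReal.ofReal (K * c * N) := by gcongr
      _ = _ := (ENNReal.ofReal_mul hM0).symm
  rw [eLpNorm_eq_lintegral_rpow_enorm_toReal (by norm_num) (by norm_num)]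
  simp only [ENNReal.toReal_ofNat]
  calc (∫⁻ x, ‖F x‖ₑ ^ (2:ℝ)) ^ (1 / (2:ℝ))
      ≤ (ENNReal.ofReal (M * (K * c * N))) ^ (1 / (2:ℝ)) := by gcongr
    _ = ENNReal.ofReal (Real.sqrt (M * (K * c * N))) := by
        rw [ENNReal.ofReal_rpow_of_nonneg (by positivity) (by norm_num), Real.sqrt_eq_rpow]
    _ = ENNReal.ofReal (Real.sqrt (M * (K * (2 * Real.pi) * N)) * Real.sqrt h) := by
        rw [← Real.sqrt_mul (by positivity)]
        congr 2; rw [hc]; ring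
    _ ≤ _ := by gcongr; linarith
end

section
/- Let a : ℝ² × ℝ² → ℂ be smooth with compact support. Then lim_{h → 0⁺} (2πh)^{−2} ∫_{[0,1]²} ∫_{[0,1]²} ∫_{ℝ²} a(x, ξ) e^{(i/h)( ⟨x−y, ξ⟩ + y₁ − x₁ )} dξ dy dx = ∫_{[0,1]²} a(x, (1,0)) dx, where the integrals are iterated (innermost in ξ ∈ ℝ², then y ∈ [0,1]², then x ∈ [0,1]²), x = (x₁,x₂), y = (y₁,y₂), and ⟨·,·⟩ is the Euclidean inner product on ℝ². -/
open MeasureTheory Set Filter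
open scoped RealInnerProductSpace Topology

/-!
With `ζ = (y - x) / (2πh)`, the `ξ`-integral is `e^{2πi ζ₀} F_x(ζ)`, where `F_x` is the Fourier
transform of `a(x, ·)`, and the factor `(2πh)⁻²` is the Jacobian of `y = x + 2πh ζ`
(`rescale_inner`). The pairing is therefore
`∫_{x ∈ Q} ∫_ζ 1_Q(x + 2πh ζ) e^{2πi ζ₀} F_x(ζ) dζ dx`, with `Q` the closed unit square.

Since `a` is smooth with compact support, `|F_x(ζ)| ≤ C (1 + |ζ|)⁻³` uniformly in `x`
(`exists_fourier_slice_bound`), which is integrable on the plane. For `x` in the interior of `Q`,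
hence for almost every `x ∈ Q`, the cut-off tends to `1` as `h → 0⁺`, and dominated convergence
in `ζ` gives the limit `∫ e^{2πi ζ₀} F_x(ζ) dζ = a(x, (1,0))` by Fourier inversion
(`tendsto_rescaled`). Dominated convergence in `x`, with a constant bound on `Q`, concludes.
-/

open scoped FourierTransform

namespace PlaneWave

/-- The plane, with its Euclidean structure. -/
abbrev E₂ : Type := EuclideanSpace ℝ (Fin 2)

/-- The closed unit square, a fundamental domain of the torus. -/
def unitSquare : Set E₂ := {x | ∀ i, x i ∈ Set.Icc (0:ℝ) 1}

lemma unitSquare_eq : unitSquare =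
    (EuclideanSpace.equiv (Fin 2) ℝ) ⁻¹' (Set.pi Set.univ fun _ => Set.Icc (0:ℝ) 1) := by
  ext x
  simp only [unitSquare, Set.mem_preimage, Set.mem_univ_pi, Set.mem_ofPred_eq]
  rfl

lemma isCompact_unitSquare : IsCompact unitSquare := by
  rw [unitSquare_eq]
  exact (EuclideanSpace.equiv (Fin 2) ℝ).toHomeomorph.isCompact_preimage.2
    (isCompact_univ_pi fun _ => isCompact_Icc)

lemma measurableSet_unitSquare : MeasurableSet unitSquare :=
  isCompact_unitSquare.isClosed.measurableSet

lemma convex_unitSquare : Convex ℝ unitSquare := by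
  rw [unitSquare_eq]
  exact (convex_pi fun _ _ => convex_Icc (0:ℝ) 1).linear_preimage
    (EuclideanSpace.equiv (Fin 2) ℝ).toLinearMap

/-- The partial derivatives in `ξ` are restrictions of the full derivative. -/
lemma norm_iteratedFDeriv_slice_le {a : E₂ × E₂ → ℂ} (ha : ContDiff ℝ (⊤ : ℕ∞) a) (n : ℕ)
    (x ξ : E₂) :
    ‖iteratedFDeriv ℝ n (fun ξ => a (x, ξ)) ξ‖ ≤ ‖iteratedFDeriv ℝ n a (x, ξ)‖ := by
  have h1 : (fun ξ => a (x, ξ)) =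
      (fun z => a ((x, 0) + z)) ∘ (ContinuousLinearMap.inr ℝ E₂ E₂) := by
    ext ξ; simp
  have h2 : ContDiff ℝ (⊤ : ℕ∞) (fun z => a ((x, 0) + z)) :=
    ha.comp (contDiff_const.add contDiff_id)
  rw [h1, ContinuousLinearMap.iteratedFDeriv_comp_right _ h2 ξ (i := n) (by exact_mod_cast le_top),
    iteratedFDeriv_comp_add_left]
  refine (ContinuousMultilinearMap.norm_compContinuousLinearMap_le _ _).trans ?_
  have h3 : (∏ _i : Fin n, ‖ContinuousLinearMap.inr ℝ E₂ E₂‖) ≤ 1 :=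
    Finset.prod_le_one (fun _ _ => norm_nonneg _)
      (fun _ _ => ContinuousLinearMap.norm_inr_le_one ℝ E₂ E₂)
  calc _ ≤ ‖iteratedFDeriv ℝ n a ((x, 0) + ContinuousLinearMap.inr ℝ E₂ E₂ ξ)‖ * 1 := by gcongr
    _ = _ := by simp

lemma hasCompactSupport_slice {a : E₂ × E₂ → ℂ} (hac : HasCompactSupport a) (x : E₂) :
    HasCompactSupport (fun ξ => a (x, ξ)) := by
  refine HasCompactSupport.of_support_subset_isCompact (hac.isCompact.image continuous_snd) ?_
  intro ξ hξ
  exact ⟨(x, ξ), subset_tsupport _ hξ, rfl⟩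

lemma contDiff_slice {a : E₂ × E₂ → ℂ} (ha : ContDiff ℝ (⊤ : ℕ∞) a) (x : E₂) :
    ContDiff ℝ (⊤ : ℕ∞) (fun ξ => a (x, ξ)) :=
  ha.comp (contDiff_const.prodMk contDiff_id)

lemma integrable_norm_iteratedFDeriv_slice {a : E₂ × E₂ → ℂ} (ha : ContDiff ℝ (⊤ : ℕ∞) a)
    (hac : HasCompactSupport a) (k n : ℕ) (x : E₂) :
    Integrable (fun ξ => ‖ξ‖ ^ k * ‖iteratedFDeriv ℝ n (fun ξ => a (x, ξ)) ξ‖) := by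
  have hc : Continuous (iteratedFDeriv ℝ n (fun ξ => a (x, ξ))) :=
    (contDiff_slice ha x).continuous_iteratedFDeriv (by exact_mod_cast le_top)
  refine Continuous.integrable_of_hasCompactSupport (by fun_prop) ?_
  exact (((hasCompactSupport_slice hac x).iteratedFDeriv n).norm).mul_left

/-- All slices are supported in one compact set and their derivatives are uniformly bounded. -/
lemma exists_integral_slice_bound {a : E₂ × E₂ → ℂ} (ha : ContDiff ℝ (⊤ : ℕ∞) a)
    (hac : HasCompactSupport a) (n : ℕ) :
    ∃ M : ℝ, ∀ x : E₂, ∫ ξ, ‖iteratedFDeriv ℝ n (fun ξ => a (x, ξ)) ξ‖ ≤ M := by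
  obtain ⟨C, hC⟩ := (hac.iteratedFDeriv (𝕜 := ℝ) n).exists_bound_of_continuous
    (ha.continuous_iteratedFDeriv (by exact_mod_cast le_top))
  have hK : IsCompact (Prod.snd '' tsupport a) := hac.isCompact.image continuous_snd
  set K := Prod.snd '' tsupport a
  refine ⟨∫ ξ, K.indicator (fun _ => C) ξ, fun x => ?_⟩
  refine integral_mono (by simpa using integrable_norm_iteratedFDeriv_slice ha hac 0 n x)
    ((integrable_indicator_iff hK.isClosed.measurableSet).2
      (integrableOn_const hK.measure_lt_top.ne)) ?_
  intro ξ
  refine (norm_iteratedFDeriv_slice_le ha n x ξ).trans ?_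
  by_cases hξ : ξ ∈ K
  · simpa [hξ] using hC (x, ξ)
  · have : iteratedFDeriv ℝ n a (x, ξ) = 0 := by
      by_contra hne
      exact hξ ⟨(x, ξ), support_iteratedFDeriv_subset n hne, rfl⟩
    simp [hξ, this]

lemma exists_pow_mul_fourier_slice_bound {a : E₂ × E₂ → ℂ} (ha : ContDiff ℝ (⊤ : ℕ∞) a)
    (hac : HasCompactSupport a) (n : ℕ) :
    ∃ M : ℝ, ∀ x ζ : E₂, ‖ζ‖ ^ n * ‖𝓕 (fun ξ => a (x, ξ)) ζ‖ ≤ M := by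
  choose M hM using exists_integral_slice_bound ha hac
  refine ⟨2 ^ n * ∑ m ∈ Finset.range (n + 1), M m, fun x ζ => ?_⟩
  have h := Real.pow_mul_norm_iteratedFDeriv_fourier_le (K := ⊤) (N := ⊤) (contDiff_slice ha x)
    (fun k n _ _ => integrable_norm_iteratedFDeriv_slice ha hac k n x)
    (k := 0) (n := n) (by simp) (by simp) ζ
  simp only [norm_iteratedFDeriv_zero, Finset.sum_product, zero_add, Finset.range_one,
    Finset.sum_singleton, pow_zero, one_mul, Nat.cast_zero, mul_zero] at h
  refine h.trans ?_
  gcongr with m hm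
  exact hM m x

/-- Decay of the Fourier transform of the slices `a(x, ·)`, uniformly in `x`; the exponent exceeds
the dimension `2`, so that the bound is integrable. -/
lemma exists_fourier_slice_bound {a : E₂ × E₂ → ℂ} (ha : ContDiff ℝ (⊤ : ℕ∞) a)
    (hac : HasCompactSupport a) :
    ∃ C : ℝ, ∀ x ζ : E₂, ‖𝓕 (fun ξ => a (x, ξ)) ζ‖ ≤ C * (1 + ‖ζ‖) ^ (-(3:ℝ)) := by
  obtain ⟨M0, h0⟩ := exists_pow_mul_fourier_slice_bound ha hac 0
  obtain ⟨M3, h3⟩ := exists_pow_mul_fourier_slice_bound ha hac 3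
  refine ⟨4 * (M0 + M3), fun x ζ => ?_⟩
  have e : (1 + ‖ζ‖) ^ (-(3:ℝ)) = ((1 + ‖ζ‖) ^ 3)⁻¹ := by
    rw [Real.rpow_neg (by positivity)]
    norm_cast
  rw [e, ← div_eq_mul_inv, le_div_iff₀ (by positivity)]
  have h0' := h0 x ζ
  have h3' := h3 x ζ
  rw [pow_zero, one_mul] at h0'
  set t := ‖ζ‖
  have ht : 0 ≤ t := norm_nonneg _
  have hp : (1 + t) ^ 3 ≤ 4 * (1 + t ^ 3) := by
    nlinarith [mul_nonneg (add_nonneg ht zero_le_one) (sq_nonneg (t - 1))]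
  have hF := norm_nonneg (𝓕 (fun ξ => a (x, ξ)) ζ)
  nlinarith [mul_le_mul_of_nonneg_left hp hF]

lemma integrable_decay (C : ℝ) : Integrable (fun ζ : E₂ => C * (1 + ‖ζ‖) ^ (-(3:ℝ))) :=
  (integrable_one_add_norm (by simp; norm_num)).const_mul C

/-- The integrand after the substitution `y = x + 2πh ζ`. -/
noncomputable def rescaled (a : E₂ × E₂ → ℂ) (h : ℝ) (x ζ : E₂) : ℂ :=
  unitSquare.indicator 1 (x + (2 * Real.pi * h) • ζ) *
    (Complex.exp (↑(2 * Real.pi * ζ 0) * Complex.I) * 𝓕 (fun ξ => a (x, ξ)) ζ)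

lemma norm_rescaled_le (a : E₂ × E₂ → ℂ) (h : ℝ) (x ζ : E₂) :
    ‖rescaled a h x ζ‖ ≤ ‖𝓕 (fun ξ => a (x, ξ)) ζ‖ := by
  unfold rescaled
  rw [norm_mul, norm_mul, Complex.norm_exp_ofReal_mul_I, one_mul]
  refine mul_le_of_le_one_left (norm_nonneg _) ?_
  by_cases hm : x + (2 * Real.pi * h) • ζ ∈ unitSquare <;> simp [hm]

lemma stronglyMeasurable_rescaled {a : E₂ × E₂ → ℂ} (ha : Continuous a) (h : ℝ) :
    StronglyMeasurable (fun p : E₂ × E₂ => rescaled a h p.1 p.2) := by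
  unfold rescaled
  refine StronglyMeasurable.mul ?_ (StronglyMeasurable.mul ?_ ?_)
  · have : StronglyMeasurable (unitSquare.indicator (1 : E₂ → ℂ)) :=
      stronglyMeasurable_one.indicator measurableSet_unitSquare
    exact this.comp_measurable (by fun_prop)
  · exact Continuous.stronglyMeasurable (by fun_prop)
  · simp_rw [Real.fourier_eq']
    refine StronglyMeasurable.integral_prod_right'
      (f := fun q : (E₂ × E₂) × E₂ =>
        Complex.exp (↑(-2 * Real.pi * ⟪q.2, q.1.2⟫) * Complex.I) • a (q.1.1, q.2)) ?_
    exact Continuous.stronglyMeasurable (by fun_prop)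

lemma rescale_inner (a : E₂ × E₂ → ℂ) {h : ℝ} (hh : 0 < h) (x : E₂) :
    Complex.ofReal (((2 * Real.pi * h) ^ 2)⁻¹) * ∫ y in unitSquare, ∫ ξ : E₂,
        a (x, ξ) * Complex.exp (Complex.I * Complex.ofReal ((⟪x - y, ξ⟫ + y 0 - x 0) / h)) =
      ∫ ζ, rescaled a h x ζ := by
  have hpi := Real.pi_pos
  set G : E₂ → ℂ := fun y => ∫ ξ : E₂,
    a (x, ξ) * Complex.exp (Complex.I * Complex.ofReal ((⟪x - y, ξ⟫ + y 0 - x 0) / h)) with hG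
  have key : ∀ ζ, rescaled a h x ζ =
      (fun y => unitSquare.indicator G (x + y)) ((2 * Real.pi * h) • ζ) := by
    intro ζ
    by_cases hm : x + (2 * Real.pi * h) • ζ ∈ unitSquare
    · simp only [rescaled, Set.indicator_of_mem hm, Pi.one_apply, one_mul, hG]
      rw [Real.fourier_eq', ← integral_const_mul]
      refine integral_congr_ae (Eventually.of_forall fun ξ => ?_)
      simp only [smul_eq_mul]
      rw [← mul_assoc, ← Complex.exp_add, mul_comm]
      congr 2
      have : (⟪x - (x + (2 * Real.pi * h) • ζ), ξ⟫ + (x + (2 * Real.pi * h) • ζ) 0 - x 0) / h =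
          2 * Real.pi * ζ 0 + -2 * Real.pi * ⟪ξ, ζ⟫ := by
        rw [sub_add_cancel_left, inner_neg_left, real_inner_smul_left, real_inner_comm]
        simp only [PiLp.add_apply, PiLp.smul_apply, smul_eq_mul]
        field_simp
        ring
      rw [this]
      push_cast
      ring
    · simp [rescaled, hm]
  rw [integral_congr_ae (Eventually.of_forall key),
    Measure.integral_comp_smul volume (fun y => unitSquare.indicator G (x + y)), integral_add_left_eq_self (unitSquare.indicator G) x,
    integral_indicator measurableSet_unitSquare, finrank_euclideanSpace_fin,
    abs_of_nonneg (by positivity), Complex.real_smul]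

lemma integral_inversion {a : E₂ × E₂ → ℂ} (ha : ContDiff ℝ (⊤ : ℕ∞) a)
    (hac : HasCompactSupport a) (x : E₂) (hF : Integrable (𝓕 (fun ξ => a (x, ξ)))) :
    ∫ ζ : E₂, Complex.exp (↑(2 * Real.pi * ζ 0) * Complex.I) * 𝓕 (fun ξ => a (x, ξ)) ζ =
      a (x, EuclideanSpace.single (0 : Fin 2) (1:ℝ)) := by
  have hc := (contDiff_slice ha x).continuous
  have h := congrFun (hc.fourierInv_fourier_eq
    (hc.integrable_of_hasCompactSupport (hasCompactSupport_slice hac x)) hF)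
    (EuclideanSpace.single (0 : Fin 2) (1:ℝ))
  rw [Real.fourierInv_eq'] at h
  simpa [EuclideanSpace.inner_single_right] using h

lemma tendsto_rescaled {a : E₂ × E₂ → ℂ} (ha : ContDiff ℝ (⊤ : ℕ∞) a)
    (hac : HasCompactSupport a) {x : E₂} (hx : unitSquare ∈ 𝓝 x) :
    Tendsto (fun h : ℝ => ∫ ζ, rescaled a h x ζ) (𝓝[>] 0)
      (𝓝 (a (x, EuclideanSpace.single (0 : Fin 2) (1:ℝ)))) := by
  obtain ⟨C, hC⟩ := exists_fourier_slice_bound ha hac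
  have hF : Integrable (𝓕 (fun ξ => a (x, ξ))) := by
    refine (integrable_decay C).mono' ?_ (Eventually.of_forall (hC x))
    have hc := (contDiff_slice ha x).continuous
    exact (VectorFourier.fourierIntegral_continuous Real.continuous_fourierChar
      continuous_inner (hc.integrable_of_hasCompactSupport
        (hasCompactSupport_slice hac x))).aestronglyMeasurable
  rw [← integral_inversion ha hac x hF]
  refine tendsto_integral_filter_of_dominated_convergence
    (fun ζ => C * (1 + ‖ζ‖) ^ (-(3:ℝ))) ?_ ?_ (integrable_decay C) ?_
  · exact Eventually.of_forall fun h => ((stronglyMeasurable_rescaled ha.continuous h).comp_measurable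
      measurable_prodMk_left).aestronglyMeasurable
  · exact Eventually.of_forall fun h => Eventually.of_forall fun ζ =>
      (norm_rescaled_le a h x ζ).trans (hC x ζ)
  · refine Eventually.of_forall fun ζ => ?_
    have hlim : Tendsto (fun h : ℝ => x + (2 * Real.pi * h) • ζ) (𝓝[>] 0) (𝓝 x) := by
      have : Continuous (fun h : ℝ => x + (2 * Real.pi * h) • ζ) := by fun_prop
      simpa using (this.tendsto 0).mono_left nhdsWithin_le_nhds
    refine tendsto_const_nhds.congr' ?_
    filter_upwards [hlim.eventually hx] with h hh
    have hh' : x + (2 * Real.pi * h) • ζ ∈ unitSquare := hh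
    simp [rescaled, hh']

end PlaneWave

/-- Stationary phase computation from Section 5.1: the semiclassical pairing of the plane
wave `e^{i x₁ / h}` on the square torus against `Op_h(a)` converges, as `h → 0⁺`, to the
integral of `a(x, (1,0))` over the fundamental square. -/
theorem plane_wave_defect_measure_pairing
    (a : EuclideanSpace ℝ (Fin 2) × EuclideanSpace ℝ (Fin 2) → ℂ)
    (ha : ContDiff ℝ (⊤ : ℕ∞) a) (hac : HasCompactSupport a) :
    Filter.Tendsto
      (fun h : ℝ =>
        Complex.ofReal (((2 * Real.pi * h) ^ 2)⁻¹) *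
          ∫ x in {x : EuclideanSpace ℝ (Fin 2) | ∀ i, x i ∈ Set.Icc (0:ℝ) 1},
            ∫ y in {y : EuclideanSpace ℝ (Fin 2) | ∀ i, y i ∈ Set.Icc (0:ℝ) 1},
              ∫ ξ : EuclideanSpace ℝ (Fin 2),
                a (x, ξ) *
                  Complex.exp (Complex.I * Complex.ofReal ((⟪x - y, ξ⟫ + y 0 - x 0) / h)))
      (𝓝[>] 0)
      (𝓝 (∫ x in {x : EuclideanSpace ℝ (Fin 2) | ∀ i, x i ∈ Set.Icc (0:ℝ) 1},
            a (x, EuclideanSpace.single (0 : Fin 2) (1:ℝ)))) := by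
  change Tendsto (fun h : ℝ => Complex.ofReal (((2 * Real.pi * h) ^ 2)⁻¹) *
    ∫ x in PlaneWave.unitSquare, ∫ y in PlaneWave.unitSquare, _) _
    (𝓝 (∫ x in PlaneWave.unitSquare, _))
  have heq : ∀ᶠ h : ℝ in 𝓝[>] 0,
      (∫ x in PlaneWave.unitSquare, ∫ ζ, PlaneWave.rescaled a h x ζ) =
      Complex.ofReal (((2 * Real.pi * h) ^ 2)⁻¹) * ∫ x in PlaneWave.unitSquare,
        ∫ y in PlaneWave.unitSquare, ∫ ξ : EuclideanSpace ℝ (Fin 2),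
          a (x, ξ) *
            Complex.exp (Complex.I * Complex.ofReal ((⟪x - y, ξ⟫ + y 0 - x 0) / h)) := by
    filter_upwards [self_mem_nhdsWithin] with h hh
    rw [← integral_const_mul]
    simp_rw [PlaneWave.rescale_inner a hh]
  refine Tendsto.congr' heq ?_
  obtain ⟨C, hC⟩ := PlaneWave.exists_fourier_slice_bound ha hac
  refine tendsto_integral_filter_of_dominated_convergence
    (fun _ => ∫ ζ : EuclideanSpace ℝ (Fin 2), C * (1 + ‖ζ‖) ^ (-(3:ℝ))) ?_ ?_ ?_ ?_
  · exact Eventually.of_forall fun h =>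
      (PlaneWave.stronglyMeasurable_rescaled ha.continuous h).integral_prod_right'.aestronglyMeasurable
  · exact Eventually.of_forall fun h => Eventually.of_forall fun x =>
      norm_integral_le_of_norm_le (PlaneWave.integrable_decay C)
        (Eventually.of_forall fun ζ => (PlaneWave.norm_rescaled_le a h x ζ).trans (hC x ζ))
  · exact integrableOn_const PlaneWave.isCompact_unitSquare.measure_lt_top.ne
  · -- The square is convex, so its boundary is a null set.
    have hfr : ∀ᵐ x : EuclideanSpace ℝ (Fin 2), x ∉ frontier PlaneWave.unitSquare :=
      measure_eq_zero_iff_ae_notMem.1 (PlaneWave.convex_unitSquare.addHaar_frontier volume)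
    rw [ae_restrict_iff' PlaneWave.measurableSet_unitSquare]
    filter_upwards [hfr] with x hx hxQ
    refine PlaneWave.tendsto_rescaled ha hac (mem_interior_iff_mem_nhds.1 ?_)
    by_contra hni
    exact hx ⟨subset_closure hxQ, hni⟩
end

section
/- Let χ : ℝ → ℝ be smooth with compact support contained in (−1, 1) and χ ≡ 1 on [−1/2, 1/2]. For l ∈ ℕ set c_l := (1/(2^l · l!)) · √( (2l+1)! / (4π) ). Then lim_{l → ∞} ∫_0^{2π} ∫_{−π/2}^{π/2} c_l² | (cos ω)^l − χ(ω) e^{−l ω² / 2} |² cos ω dω dθ = 0. -/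
/-!
The proof rests on a uniform bound. With `a = cos ω` and `b = exp (-ω²/2)`, both `|a|` and `|b|` are
at most `exp (-ω²/5)` for `|ω| ≤ π/2`, and `|a - b| ≤ ω⁴`; hence
`|a^(n+1) - b^(n+1)| ≤ (n+1) ω⁴ exp (-nω²/5)`. Since `1 - χ` is bounded and vanishes near `0`, also
`|1 - χ| b^(n+1) ≤ 16 M ω⁴ exp (-nω²/5)`. As `y² exp (-y) ≤ 2`, the difference of the two profiles
is `O(1/n)` uniformly in `ω` (`beam_profile_bound`). The crude bound `c_l² ≤ 2l + 1`
(`beam_const_sq_le`) then makes the integrand `O(1/n)` on a domain of finite measure.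
-/

open MeasureTheory Real Filter
open scoped Topology

/-- Follows from `(2l+1)! = (2l+1) * centralBinom l * l!²` and `centralBinom l ≤ 4^l`. -/
lemma beam_const_sq_le (l : ℕ) :
    ((1 / (2 ^ l * (Nat.factorial l : ℝ)))
      * Real.sqrt ((Nat.factorial (2 * l + 1) : ℝ) / (4 * Real.pi))) ^ 2 ≤ 2 * (l : ℝ) + 1 := by
  have hfac : (Nat.factorial (2 * l + 1) : ℝ)
      ≤ (2 * l + 1) * (4 ^ l * (Nat.factorial l : ℝ) ^ 2) := by
    have h1 : Nat.choose (2 * l) l * Nat.factorial l * Nat.factorial l = Nat.factorial (2 * l) := by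
      have := Nat.choose_mul_factorial_mul_factorial (show l ≤ 2 * l by omega)
      rwa [show 2 * l - l = l by omega] at this
    have h2 : Nat.choose (2 * l) l ≤ 4 ^ l := by
      have := Nat.choose_le_two_pow (2 * l) l
      rwa [pow_mul] at this
    have h3 : Nat.factorial (2 * l + 1)
        ≤ (2 * l + 1) * (4 ^ l * (Nat.factorial l) ^ 2) := by
      rw [Nat.factorial_succ, ← h1, mul_assoc (Nat.choose _ _), ← sq]
      gcongr
    exact_mod_cast h3
  have hpos : (0 : ℝ) < Nat.factorial l := by exact_mod_cast Nat.factorial_pos l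
  rw [mul_pow, Real.sq_sqrt (by positivity)]
  have h4 : ((2 : ℝ) ^ l) ^ 2 = 4 ^ l := by rw [← pow_mul, mul_comm, pow_mul]; norm_num
  have hpi : (1 : ℝ) ≤ 4 * Real.pi := by linarith [Real.pi_gt_three]
  rw [div_pow, mul_pow, h4, one_pow, div_mul_eq_mul_div, one_mul, div_le_iff₀ (by positivity)]
  exact (div_le_self (by positivity) hpi).trans hfac

lemma abs_cos_sub_exp_le (x : ℝ) (hc : 0 ≤ cos x) : |cos x - exp (-x ^ 2 / 2)| ≤ x ^ 4 := by
  rcases le_total |x| 1 with h | h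
  · have h1 := Real.cos_bound h
    have hx2 : x ^ 2 ≤ 1 := by rw [← sq_abs]; nlinarith [abs_nonneg x]
    have h2 := Real.abs_exp_sub_one_sub_id_le (x := -x ^ 2 / 2)
      (by rw [abs_le]; constructor <;> nlinarith [sq_nonneg x])
    have h3 : |x| ^ 4 = x ^ 4 := by
      rw [show (4 : ℕ) = 2 * 2 by norm_num, pow_mul, sq_abs, pow_mul]
    rw [h3] at h1
    rw [abs_le] at *
    constructor <;> nlinarith [sq_nonneg (x ^ 2)]
  · have h1 : 1 ≤ x ^ 2 := by rw [← sq_abs]; nlinarith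
    have h2 : exp (-x ^ 2 / 2) ≤ 1 := Real.exp_le_one_iff.2 (by nlinarith)
    have h3 := Real.exp_pos (-x ^ 2 / 2)
    have h4 := Real.cos_le_one x
    rw [abs_le]
    constructor <;> nlinarith [sq_nonneg (x ^ 2 - 1)]

lemma cos_le_exp_neg_sq_div_five (x : ℝ) (hx : |x| ≤ π) : cos x ≤ exp (-(x ^ 2 / 5)) := by
  have h1 := Real.cos_le_one_sub_mul_cos_sq hx
  have h2 := Real.add_one_le_exp (-(x ^ 2 / 5))
  -- `1 / 5 ≤ 2 / π²` because `π² ≤ 10`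
  have h3 : (1 / 5 : ℝ) ≤ 2 / π ^ 2 := by
    rw [div_le_div_iff₀ (by norm_num) (by positivity)]
    nlinarith [Real.pi_lt_d2, Real.pi_pos]
  nlinarith [sq_nonneg x, mul_le_mul_of_nonneg_right h3 (sq_nonneg x)]

/-- `y² exp (-y) ≤ 2` at `y = n x² / 5`. -/
lemma pow_four_mul_exp_le (x : ℝ) (n : ℕ) (hn : 0 < n) :
    x ^ 4 * exp (-(x ^ 2 / 5)) ^ n ≤ 50 / (n : ℝ) ^ 2 := by
  have hn' : (0 : ℝ) < n := by exact_mod_cast hn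
  rw [← Real.exp_nat_mul, mul_neg, Real.exp_neg, ← div_eq_mul_inv,
    div_le_div_iff₀ (Real.exp_pos _) (by positivity)]
  have := Real.quadratic_le_exp_of_nonneg (x := n * (x ^ 2 / 5)) (by positivity)
  have h0 : 0 ≤ n * (x ^ 2 / 5) := by positivity
  nlinarith

/-- Away from `|x| ≤ 1/2`, where the left side vanishes, `16 x⁴ ≥ 1`. -/
lemma one_sub_cutoff_le {χ : ℝ → ℝ} {M : ℝ} (hM : ∀ x, |1 - χ x| ≤ M)
    (hχ1 : Set.EqOn χ 1 (Set.Icc (-(1/2) : ℝ) (1/2))) (x : ℝ) :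
    |1 - χ x| ≤ 16 * M * x ^ 4 := by
  have hM0 : 0 ≤ M := (abs_nonneg _).trans (hM 0)
  by_cases hx : x ∈ Set.Icc (-(1/2) : ℝ) (1/2)
  · rw [hχ1 hx]
    simp only [Pi.one_apply, sub_self, abs_zero]
    positivity
  · have h1 : 1 / 2 ≤ |x| := by
      by_contra! h
      exact hx (abs_le.1 h.le)
    have h2 : 1 / 4 ≤ x ^ 2 := by rw [← sq_abs]; nlinarith
    have h3 : 1 ≤ 16 * x ^ 4 := by nlinarith
    nlinarith [hM x]

lemma beam_profile_bound {χ : ℝ → ℝ} {M : ℝ} (hM : ∀ x, |1 - χ x| ≤ M)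
    (hχ1 : Set.EqOn χ 1 (Set.Icc (-(1/2) : ℝ) (1/2))) (n : ℕ) (hn : 0 < n)
    (x : ℝ) (hx : |x| ≤ π / 2) :
    |cos x ^ (n + 1) - χ x * exp (-(((n + 1 : ℕ) : ℝ) * x ^ 2) / 2)|
      ≤ 100 * (1 + 16 * M) / n := by
  have hM0 : 0 ≤ M := (abs_nonneg _).trans (hM 0)
  have hn' : (1 : ℝ) ≤ n := by exact_mod_cast hn
  have hc : 0 ≤ cos x := Real.cos_nonneg_of_mem_Icc (abs_le.1 hx)
  set b := exp (-x ^ 2 / 2) with hb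
  set g := exp (-(x ^ 2 / 5)) with hg
  have hb0 : 0 < b := Real.exp_pos _
  have hag : cos x ≤ g := cos_le_exp_neg_sq_div_five x (by linarith [Real.pi_pos])
  have hbg : b ≤ g := Real.exp_le_exp.2 (by nlinarith [sq_nonneg x])
  have hg1 : b ≤ 1 := Real.exp_le_one_iff.2 (by nlinarith [sq_nonneg x])
  have hexp : exp (-(((n + 1 : ℕ) : ℝ) * x ^ 2) / 2) = b ^ (n + 1) := by
    rw [hb, ← Real.exp_nat_mul]
    congr 1
    ring
  have hkey := pow_four_mul_exp_le x n hn
  rw [← hg] at hkey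
  have h1 : |cos x ^ (n + 1) - b ^ (n + 1)| ≤ (n + 1) * (x ^ 4 * g ^ n) := by
    have h := abs_pow_sub_pow_le (cos x) b (n + 1)
    rw [abs_of_nonneg hc, abs_of_pos hb0, Nat.add_sub_cancel] at h
    have hmax : max (cos x) b ^ n ≤ g ^ n :=
      pow_le_pow_left₀ (le_max_of_le_left hc) (max_le hag hbg) n
    calc _ ≤ _ := h
      _ ≤ x ^ 4 * ((n + 1 : ℕ) : ℝ) * g ^ n := by
        gcongr
        exact abs_cos_sub_exp_le x hc
      _ = _ := by push_cast; ring
  have h2 : |(1 - χ x) * b ^ (n + 1)| ≤ 16 * M * (x ^ 4 * g ^ n) := by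
    rw [abs_mul, abs_of_pos (pow_pos hb0 _)]
    have hbn : b ^ (n + 1) ≤ g ^ n :=
      (pow_le_pow_of_le_one hb0.le hg1 n.le_succ).trans (pow_le_pow_left₀ hb0.le hbg n)
    calc _ ≤ (16 * M * x ^ 4) * g ^ n := by
          gcongr
          exact one_sub_cutoff_le hM hχ1 x
      _ = _ := by ring
  rw [hexp, show cos x ^ (n + 1) - χ x * b ^ (n + 1)
    = (cos x ^ (n + 1) - b ^ (n + 1)) + (1 - χ x) * b ^ (n + 1) by ring]
  calc _ ≤ (n + 1) * (x ^ 4 * g ^ n) + 16 * M * (x ^ 4 * g ^ n) :=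
        (abs_add_le _ _).trans (add_le_add h1 h2)
    _ = (n + 1 + 16 * M) * (x ^ 4 * g ^ n) := by ring
    _ ≤ (n + 1 + 16 * M) * (50 / (n : ℝ) ^ 2) := by gcongr
    _ ≤ (2 * n * (1 + 16 * M)) * (50 / (n : ℝ) ^ 2) := by
        gcongr
        nlinarith
    _ = _ := by field_simp; ring

/-- Section 5.2.2: the Gaussian approximant `c_l e^{-ilθ} χ(ω) e^{-lω²/2}` differs from
the Gaussian beam `c_l e^{-ilθ} (cos ω)^l` by `o(1)` in `L²(S²)` as `l → ∞`. -/
theorem gaussian_beam_approximation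
    (χ : ℝ → ℝ) (hχ : ContDiff ℝ (⊤ : ℕ∞) χ) (hχc : HasCompactSupport χ)
    (hχsupp : tsupport χ ⊆ Set.Ioo (-1 : ℝ) 1)
    (hχ1 : Set.EqOn χ 1 (Set.Icc (-(1/2) : ℝ) (1/2))) :
    Filter.Tendsto
      (fun l : ℕ =>
        ∫ θ in (0:ℝ)..(2 * Real.pi),
          ∫ ω in (-(Real.pi / 2))..(Real.pi / 2),
            ((1 / (2 ^ l * (Nat.factorial l : ℝ)))
                * Real.sqrt ((Nat.factorial (2 * l + 1) : ℝ) / (4 * Real.pi))) ^ 2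
              * |Real.cos ω ^ l - χ ω * Real.exp (-((l : ℝ) * ω ^ 2) / 2)| ^ 2
              * Real.cos ω)
      Filter.atTop (𝓝 0) := by
  obtain ⟨C, hC⟩ := hχc.exists_bound_of_continuous hχ.continuous
  have hM : ∀ x, |1 - χ x| ≤ 1 + C := fun x => by
    have h1 := abs_sub (1 : ℝ) (χ x)
    have h2 := hC x
    rw [Real.norm_eq_abs] at h2
    rw [abs_one] at h1
    linarith
  set D : ℝ := 100 * (1 + 16 * (1 + C)) with hD
  rw [← tendsto_add_atTop_iff_nat 1]
  have hlim : Tendsto (fun n : ℕ => 5 * D ^ 2 * |π / 2 - -(π / 2)| * |2 * π - 0| / (n : ℝ))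
      atTop (𝓝 0) := tendsto_const_div_atTop_nhds_zero_nat _
  refine squeeze_zero_norm' ?_ hlim
  filter_upwards [eventually_gt_atTop 0] with n hn
  have hn' : (1 : ℝ) ≤ n := by exact_mod_cast hn
  have hpt : ∀ ω ∈ Set.uIoc (-(π / 2)) (π / 2),
      ‖((1 / (2 ^ (n + 1) * (Nat.factorial (n + 1) : ℝ)))
          * Real.sqrt ((Nat.factorial (2 * (n + 1) + 1) : ℝ) / (4 * Real.pi))) ^ 2
        * |Real.cos ω ^ (n + 1) - χ ω * Real.exp (-(((n + 1 : ℕ) : ℝ) * ω ^ 2) / 2)| ^ 2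
        * Real.cos ω‖ ≤ 5 * D ^ 2 / n := by
    intro ω hω
    rw [Set.uIoc_of_le (by linarith [Real.pi_pos])] at hω
    have hd := beam_profile_bound hM hχ1 n hn ω (abs_le.2 ⟨hω.1.le, hω.2⟩)
    have hc := beam_const_sq_le (n + 1)
    have hc' : 2 * ((n + 1 : ℕ) : ℝ) + 1 ≤ 5 * n := by push_cast; linarith
    rw [norm_mul, norm_mul, Real.norm_eq_abs, Real.norm_eq_abs, Real.norm_eq_abs,
      abs_of_nonneg (sq_nonneg _), abs_of_nonneg (sq_nonneg |_|)]
    calc _ ≤ (5 * n) * (D / n) ^ 2 * 1 := by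
          gcongr
          · exact hc.trans hc'
          · exact Real.abs_cos_le_one ω
      _ = _ := by field_simp
  refine (intervalIntegral.norm_integral_le_of_norm_le_const fun θ _ =>
    intervalIntegral.norm_integral_le_of_norm_le_const hpt).trans_eq ?_
  ring
end
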